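/- Let ρ be a symmetric (even) probability density on ℝ such that ∬ |ρ(x)ρ(y)/(x(x−y))| extended appropriately is integrable in the principal-value sense. Then ∫ H(ρ)(x) (1/x) ρ(x) dx = 0, where H(ρ)(x) = p.v.∫ ρ(y)/(x−y) dy is the Hilbert transform. -/

import Mathlib

open MeasureTheory Filter

noncomputable def CT (f : ℝ → ℝ) (z : ℂ) : ℂ := ∫ y, (f y : ℂ) / (z - (y : ℂ))

lemma CT_sub_ne {z : ℂ} (hz : z.im ≠ 0) (y : ℝ) : z - (y : ℂ) ≠ 0 := by
  intro h
  apply hz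
  have := congrArg Complex.im h
  simpa using this

lemma CT_im_le (z : ℂ) (y : ℝ) : |z.im| ≤ ‖z - (y : ℂ)‖ := by
  have := Complex.abs_im_le_norm (z - (y : ℂ))
  simpa using this

lemma CT_aesm {f : ℝ → ℝ} (hf : Integrable f) (z : ℂ) :
    AEStronglyMeasurable (fun y : ℝ => (f y : ℂ) / (z - (y : ℂ))) := by
  have h1 : AEStronglyMeasurable (fun y : ℝ => (f y : ℂ)) :=
    hf.ofReal.aestronglyMeasurable
  have h2 : Measurable (fun y : ℝ => (z - (y : ℂ))⁻¹) := by fun_prop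
  simp only [div_eq_mul_inv]
  exact h1.mul h2.aestronglyMeasurable

lemma CT_bound {f : ℝ → ℝ} {z : ℂ} (hz : z.im ≠ 0) (y : ℝ) :
    ‖(f y : ℂ) / (z - (y : ℂ))‖ ≤ |f y| / |z.im| := by
  rw [norm_div, Complex.norm_real, Real.norm_eq_abs]
  have := CT_im_le z y
  have h0 : 0 < |z.im| := abs_pos.2 hz
  gcongr

lemma CT_integrable {f : ℝ → ℝ} (hf : Integrable f) {z : ℂ} (hz : z.im ≠ 0) :
    Integrable (fun y : ℝ => (f y : ℂ) / (z - (y : ℂ))) := by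
  refine Integrable.mono' (hf.abs.div_const |z.im|) (CT_aesm hf z) ?_
  exact Eventually.of_forall fun y => CT_bound hz y

lemma CT_norm_le {f : ℝ → ℝ} (hf : Integrable f) {z : ℂ} (hz : z.im ≠ 0) :
    ‖CT f z‖ ≤ (∫ y, |f y|) / |z.im| := by
  rw [CT, ← integral_div]
  exact norm_integral_le_of_norm_le (hf.abs.div_const |z.im|)
    (Eventually.of_forall fun y => CT_bound hz y)

lemma CT_conj (f : ℝ → ℝ) (z : ℂ) :
    CT f ((starRingEnd ℂ) z) = (starRingEnd ℂ) (CT f z) := by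
  rw [CT, CT, ← integral_conj]
  congr 1
  ext y
  simp

lemma CT_hasDerivAt {f : ℝ → ℝ} (hf : Integrable f) {z : ℂ} (hz : z.im ≠ 0) :
    DifferentiableAt ℂ (CT f) z := by
  have h0 : 0 < |z.im| := abs_pos.2 hz
  have him : ∀ w ∈ Metric.ball z (|z.im| / 2), |z.im| / 2 ≤ |w.im| := by
    intro w hw
    have h1 : |w.im - z.im| < |z.im| / 2 := by
      have := Complex.abs_im_le_norm (w - z)
      rw [Metric.mem_ball, dist_eq_norm] at hw
      simp only [Complex.sub_im] at this
      linarith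
    have h2 := abs_sub_abs_le_abs_sub z.im w.im
    rw [abs_sub_comm] at h2
    linarith
  have := hasDerivAt_integral_of_dominated_loc_of_deriv_le (μ := volume) (𝕜 := ℂ)
    (F := fun (w : ℂ) (y : ℝ) => (f y : ℂ) / (w - (y : ℂ)))
    (F' := fun (w : ℂ) (y : ℝ) => -(f y : ℂ) / (w - (y : ℂ)) ^ 2) (x₀ := z)
    (bound := fun y => |f y| / (|z.im| / 2) ^ 2) (s := Metric.ball z (|z.im| / 2))
    (Metric.ball_mem_nhds z (by positivity))
    (Eventually.of_forall fun w => CT_aesm hf w) (CT_integrable hf hz) ?_ ?_ ?_ ?_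
  · exact this.2.differentiableAt
  · have h1 : AEStronglyMeasurable (fun y : ℝ => (f y : ℂ)) := hf.ofReal.aestronglyMeasurable
    have h2 : Measurable (fun y : ℝ => ((z - (y : ℂ)) ^ 2)⁻¹) := by fun_prop
    simp only [div_eq_mul_inv]
    exact h1.neg.mul h2.aestronglyMeasurable
  · refine Eventually.of_forall fun y w hw => ?_
    rw [norm_div, norm_neg, Complex.norm_real, Real.norm_eq_abs, norm_pow]
    have h1 := him w hw
    have h2 := CT_im_le w y
    gcongr
    linarith
  · exact hf.abs.div_const _
  · refine Eventually.of_forall fun y w hw => ?_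
    have h1 := him w hw
    have hw0 : w.im ≠ 0 := by
      rw [← abs_pos]; linarith
    have := (hasDerivAt_const w (f y : ℂ)).div ((hasDerivAt_id w).sub_const (y : ℂ))
      (CT_sub_ne hw0 y)
    refine HasDerivAt.congr_deriv this ?_
    simp

lemma CT_small {f : ℝ → ℝ} (hf : Integrable f) {ε : ℝ} (hε : 0 < ε) :
    ∃ t0 > 0, ∀ z : ℂ, z.im ≠ 0 → |z.im| < t0 → |z.im| * ‖CT f z‖ ≤ ε := by
  have hfin : ∫⁻ y, ENNReal.ofReal |f y| ≠ ⊤ := by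
    have := hf.abs.lintegral_lt_top
    exact this.ne
  obtain ⟨δ, hδ, hδ'⟩ := exists_pos_setLIntegral_lt_of_measure_lt hfin
    (ε := ENNReal.ofReal (ε / 2)) (by simp; exact hε)
  obtain ⟨d, hd0, hd⟩ : ∃ d : ℝ, 0 < d ∧ ENNReal.ofReal (2 * d) < δ := by
    rcases eq_or_ne δ ⊤ with h | h
    · exact ⟨1, one_pos, by rw [h]; exact ENNReal.ofReal_lt_top⟩
    · refine ⟨δ.toReal / 4, by have := ENNReal.toReal_pos hδ.ne' h; positivity, ?_⟩
      have := ENNReal.toReal_pos hδ.ne' h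
      rw [ENNReal.ofReal_lt_iff_lt_toReal (by positivity) h]
      linarith
  set A := ∫ y, |f y| with hA
  have hA0 : 0 ≤ A := integral_nonneg fun y => abs_nonneg _
  refine ⟨ε / 2 * d / (A + 1), by positivity, fun z hz hzt => ?_⟩
  have hz0 : 0 < |z.im| := abs_pos.2 hz
  set B := Metric.ball z.re d with hB
  have hBm : MeasurableSet B := Metric.isOpen_ball.measurableSet
  have hBi : ∫ y in B, |f y| ≤ ε / 2 := by
    have h1 := hδ' B (by rw [hB, Real.volume_ball]; exact hd)
    rw [integral_eq_lintegral_of_nonneg_ae (Eventually.of_forall fun y => abs_nonneg _)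
      hf.abs.aestronglyMeasurable.restrict]
    exact ENNReal.toReal_le_of_le_ofReal (by positivity) h1.le
  have hbd : ∀ y, ‖(f y : ℂ) / (z - (y : ℂ))‖ ≤
      B.indicator (fun y => |f y|) y / |z.im| + |f y| / d := by
    intro y
    by_cases hy : y ∈ B
    · rw [Set.indicator_of_mem hy]
      have := CT_bound (f := f) hz y
      have : 0 ≤ |f y| / d := by positivity
      linarith
    · rw [Set.indicator_of_notMem hy, zero_div, zero_add, norm_div, Complex.norm_real,
        Real.norm_eq_abs]
      have h1 : d ≤ ‖z - (y : ℂ)‖ := by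
        have := Complex.abs_re_le_norm (z - (y : ℂ))
        rw [hB, Metric.mem_ball, not_lt, Real.dist_eq, abs_sub_comm] at hy
        simp only [Complex.sub_re, Complex.ofReal_re] at this
        linarith
      gcongr
  have hI : Integrable (fun y => B.indicator (fun y => |f y|) y / |z.im| + |f y| / d) :=
    ((hf.abs.indicator hBm).div_const _).add (hf.abs.div_const _)
  have h3 : ‖CT f z‖ ≤ (∫ y in B, |f y|) / |z.im| + A / d := by
    refine (norm_integral_le_of_norm_le hI (Eventually.of_forall hbd)).trans ?_
    rw [integral_add ((hf.abs.indicator hBm).div_const _) (hf.abs.div_const _), integral_div,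
      integral_div, integral_indicator hBm]
  calc |z.im| * ‖CT f z‖ ≤ |z.im| * ((∫ y in B, |f y|) / |z.im| + A / d) := by gcongr
    _ = (∫ y in B, |f y|) + |z.im| * (A / d) := by field_simp
    _ ≤ ε / 2 + ε / 2 * d / (A + 1) * (A / d) := by gcongr
    _ = ε / 2 + ε / 2 * (A / (A + 1)) := by field_simp
    _ ≤ ε / 2 + ε / 2 * 1 := by
        gcongr
        rw [div_le_one (by positivity)]; linarith
    _ = ε := by ring

lemma CT_re_eq {f : ℝ → ℝ} (hf : Integrable f) {z : ℂ} (hz : z.im ≠ 0) :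
    (CT f z).re = ∫ y, f y * ((z.re - y) / ((z.re - y) ^ 2 + z.im ^ 2)) := by
  rw [CT]
  have := integral_re (𝕜 := ℂ) (CT_integrable hf hz)
  simp only [RCLike.re_to_complex] at this
  rw [← this]
  congr 1
  ext y
  rw [Complex.div_re, Complex.normSq_apply]
  simp
  ring

lemma CT_im_eq {f : ℝ → ℝ} (hf : Integrable f) {z : ℂ} (hz : z.im ≠ 0) :
    (CT f z).im = - ∫ y, f y * (z.im / ((z.re - y) ^ 2 + z.im ^ 2)) := by
  rw [CT]
  have := integral_im (𝕜 := ℂ) (CT_integrable hf hz)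
  simp only [RCLike.im_to_complex] at this
  rw [← this, ← integral_neg]
  congr 1
  ext y
  rw [Complex.div_im, Complex.normSq_apply]
  simp
  ring

noncomputable def kk (v : ℝ) : ℝ := 2 * v / (1 + v ^ 2) ^ 2

lemma kk_nonneg {v : ℝ} (hv : 0 < v) : 0 ≤ kk v := by unfold kk; positivity

lemma kk_meas : Measurable kk := by unfold kk; fun_prop

lemma kk_hasDerivAt (v : ℝ) : HasDerivAt (fun v : ℝ => -(1 + v ^ 2)⁻¹) (kk v) v := by
  have h : (1 + v ^ 2) ≠ 0 := by positivity
  have := (((hasDerivAt_id v).pow 2).const_add 1).inv (by simpa using h) |>.neg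
  refine HasDerivAt.congr_deriv (f := fun v : ℝ => -(1 + v ^ 2)⁻¹) this ?_
  simp [kk]
  ring

lemma kk_tendsto : Tendsto (fun v : ℝ => -(1 + v ^ 2)⁻¹) atTop (nhds 0) := by
  rw [← neg_zero]
  refine Tendsto.neg (tendsto_inv_atTop_zero.comp ?_)
  exact tendsto_atTop_add_const_left _ _ (tendsto_pow_atTop two_ne_zero)

lemma kk_int (u : ℝ) (hu : 0 ≤ u) : IntegrableOn kk (Set.Ioi u) :=
  integrableOn_Ioi_deriv_of_nonneg' (fun v _ => kk_hasDerivAt v)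
    (fun v hv => kk_nonneg (lt_of_le_of_lt hu hv)) kk_tendsto

lemma kk_integral (u : ℝ) (hu : 0 ≤ u) : ∫ v in Set.Ioi u, kk v = (1 + u ^ 2)⁻¹ := by
  rw [integral_Ioi_of_hasDerivAt_of_nonneg' (fun v _ => kk_hasDerivAt v)
    (fun v hv => kk_nonneg (lt_of_le_of_lt hu hv)) kk_tendsto]
  simp

lemma kk2_hasDerivAt (v : ℝ) :
    HasDerivAt (fun v : ℝ => 2 * (Real.arctan v - v * (1 + v ^ 2)⁻¹)) (kk v * (2 * v)) v := by
  have h : (1 + v ^ 2) ≠ 0 := by positivity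
  have h1 := (((hasDerivAt_id v).pow 2).const_add 1).inv (by simpa using h)
  have := ((Real.hasDerivAt_arctan v).sub ((hasDerivAt_id v).mul h1)).const_mul 2
  refine HasDerivAt.congr_deriv (f := fun v : ℝ => 2 * (Real.arctan v - v * (1 + v ^ 2)⁻¹)) this ?_
  simp [kk]
  field_simp

lemma kk2_tendsto : Tendsto (fun v : ℝ => 2 * (Real.arctan v - v * (1 + v ^ 2)⁻¹)) atTop
    (nhds Real.pi) := by
  have h1 : Tendsto Real.arctan atTop (nhds (Real.pi / 2)) :=
    Real.tendsto_arctan_atTop.mono_right nhdsWithin_le_nhds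
  have h2 : Tendsto (fun v : ℝ => v * (1 + v ^ 2)⁻¹) atTop (nhds 0) := by
    refine tendsto_of_tendsto_of_tendsto_of_le_of_le' tendsto_const_nhds tendsto_inv_atTop_zero
      ?_ ?_
    · filter_upwards [eventually_gt_atTop 0] with v hv
      positivity
    · filter_upwards [eventually_gt_atTop 0] with v hv
      rw [← div_eq_mul_inv, inv_eq_one_div, div_le_div_iff₀ (by positivity) hv]
      nlinarith
  have := (h1.sub h2).const_mul 2
  convert this using 2
  ring

lemma kk2_int : IntegrableOn (fun v => kk v * (2 * v)) (Set.Ioi 0) :=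
  integrableOn_Ioi_deriv_of_nonneg' (fun v _ => kk2_hasDerivAt v)
    (fun v hv => mul_nonneg (kk_nonneg hv) (by have : (0:ℝ) < v := hv; positivity)) kk2_tendsto

lemma kk2_integral : ∫ v in Set.Ioi (0:ℝ), kk v * (2 * v) = Real.pi := by
  rw [integral_Ioi_of_hasDerivAt_of_nonneg' (fun v _ => kk2_hasDerivAt v)
    (fun v hv => mul_nonneg (kk_nonneg hv) (by have : (0:ℝ) < v := hv; positivity)) kk2_tendsto]
  simp

lemma kk_Ici (u : ℝ) (hu : 0 ≤ u) :
    ∫ v in Set.Ioi (0:ℝ), (Set.Ici u).indicator kk v = (1 + u ^ 2)⁻¹ := by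
  rw [setIntegral_indicator measurableSet_Ici, ← kk_integral u hu]
  apply setIntegral_congr_set
  have h : Set.Ioi u ⊆ Set.Ioi 0 ∩ Set.Ici u := fun v hv =>
    ⟨Set.mem_Ioi.2 (lt_of_le_of_lt hu (Set.mem_Ioi.1 hv)), Set.mem_Ici.2 (le_of_lt (Set.mem_Ioi.1 hv))⟩
  have h2 : Set.Ioi 0 ∩ Set.Ici u ⊆ Set.Ici u := Set.inter_subset_right
  exact (h2.eventuallyLE.trans (Ioi_ae_eq_Ici.symm.le)).antisymm h.eventuallyLE

lemma kk_Iic (u : ℝ) (hu : 0 ≤ u) :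
    ∫ v in Set.Ioi (0:ℝ), (Set.Iic u).indicator kk v = 1 - (1 + u ^ 2)⁻¹ := by
  have h1 : ∫ v in Set.Ioi (0:ℝ), kk v = 1 := by rw [kk_integral 0 le_rfl]; simp
  rw [setIntegral_indicator measurableSet_Iic, Set.Ioi_inter_Iic]
  have h2 := setIntegral_union (μ := volume) (f := kk) (Set.Ioc_disjoint_Ioi (le_refl u))
    measurableSet_Ioi ((kk_int 0 le_rfl).mono_set Set.Ioc_subset_Ioi_self) (kk_int u hu)
  rw [Set.Ioc_union_Ioi_eq_Ioi hu, h1, kk_integral u hu] at h2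
  linarith

lemma fub {g c : ℝ → ℝ} (hg : AEStronglyMeasurable g) {A : Set (ℝ × ℝ)} (hA : MeasurableSet A)
    (hc : ∀ y, ∫ v in Set.Ioi (0:ℝ), A.indicator (fun p => kk p.1) (v, y) = c y)
    (hcg : Integrable fun y => g y * c y) :
    IntegrableOn (fun v => kk v * ∫ y, A.indicator (fun p => g p.2) (v, y)) (Set.Ioi 0) ∧
    ∫ v in Set.Ioi (0:ℝ), kk v * ∫ y, A.indicator (fun p => g p.2) (v, y) = ∫ y, g y * c y := by
  have key : ∀ v y, kk v * A.indicator (fun p => g p.2) (v, y)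
      = g y * A.indicator (fun p => kk p.1) (v, y) := by
    intro v y
    by_cases h : (v, y) ∈ A
    · simp [h, mul_comm]
    · simp [h]
  have hm : AEStronglyMeasurable
      (fun p : ℝ × ℝ => g p.2 * A.indicator (fun p => kk p.1) p)
      ((volume.restrict (Set.Ioi (0:ℝ))).prod volume) := by
    refine AEStronglyMeasurable.mul hg.comp_snd ?_
    exact ((kk_meas.comp measurable_fst).indicator hA).aestronglyMeasurable
  have hi : Integrable (fun p : ℝ × ℝ => g p.2 * A.indicator (fun p => kk p.1) p)
      ((volume.restrict (Set.Ioi (0:ℝ))).prod volume) := by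
    rw [integrable_prod_iff' hm]
    constructor
    · refine Eventually.of_forall fun y => ?_
      show Integrable (fun v => g y * A.indicator (fun p => kk p.1) (v, y)) _
      refine Integrable.const_mul ?_ _
      have : (fun v => A.indicator (fun p : ℝ × ℝ => kk p.1) (v, y))
          = ((fun v => (v, y)) ⁻¹' A).indicator kk := by
        ext v
        rfl
      rw [this]
      exact (kk_int 0 le_rfl).indicator (measurable_prodMk_right hA)
    · refine hcg.norm.congr (Eventually.of_forall fun y => ?_)
      simp only [norm_mul]
      rw [integral_const_mul, ← hc y]
      congr 1
      rw [Real.norm_eq_abs, abs_of_nonneg]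
      · refine setIntegral_congr_fun measurableSet_Ioi fun v hv => ?_
        rw [Real.norm_eq_abs, abs_of_nonneg]
        refine Set.indicator_apply_nonneg fun _ => kk_nonneg hv
      · refine setIntegral_nonneg measurableSet_Ioi fun v hv => ?_
        refine Set.indicator_apply_nonneg fun _ => kk_nonneg hv
  have e : (fun v => kk v * ∫ y, A.indicator (fun p => g p.2) (v, y))
      = fun v => ∫ y, g y * A.indicator (fun p => kk p.1) (v, y) := by
    ext v
    rw [← integral_const_mul]
    congr 1
    ext y
    exact key v y
  rw [e]
  refine ⟨hi.integral_prod_left, ?_⟩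
  rw [integral_integral_swap hi]
  congr 1
  ext y
  rw [integral_const_mul, hc]

lemma abel_lim {w : ℝ → ℝ} {Φ : ℝ → ℝ} {L M : ℝ} (hw : IntegrableOn w (Set.Ioi 0))
    (hM : ∀ ε > 0, |Φ ε| ≤ M) (hL : Tendsto Φ (nhdsWithin 0 (Set.Ioi 0)) (nhds L))
    (hm : ∀ t > 0, AEStronglyMeasurable (fun v => w v * Φ (t * v))
      (volume.restrict (Set.Ioi 0))) :
    Tendsto (fun t => ∫ v in Set.Ioi (0:ℝ), w v * Φ (t * v)) (nhdsWithin 0 (Set.Ioi 0))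
      (nhds ((∫ v in Set.Ioi (0:ℝ), w v) * L)) := by
  rw [← integral_mul_const]
  refine tendsto_integral_filter_of_dominated_convergence (fun v => |w v| * M) ?_ ?_ ?_ ?_
  · filter_upwards [self_mem_nhdsWithin] with t ht using hm t ht
  · filter_upwards [self_mem_nhdsWithin] with t ht
    filter_upwards [ae_restrict_mem measurableSet_Ioi] with v hv
    rw [norm_mul, Real.norm_eq_abs, Real.norm_eq_abs]
    gcongr
    exact hM _ (mul_pos ht hv)
  · exact hw.abs.mul_const M
  · filter_upwards [ae_restrict_mem measurableSet_Ioi] with v hv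
    refine (hL.comp ?_).const_mul _
    refine tendsto_nhdsWithin_iff.2 ⟨?_, ?_⟩
    · have : Tendsto (fun t : ℝ => t * v) (nhds 0) (nhds (0 * v)) := tendsto_id.mul_const v
      rw [zero_mul] at this
      exact this.mono_left nhdsWithin_le_nhds
    · filter_upwards [self_mem_nhdsWithin] with t ht using Set.mem_Ioi.2 (mul_pos (Set.mem_Ioi.1 ht) (Set.mem_Ioi.1 hv))

lemma bdd_of_tendsto {Φ : ℝ → ℝ} {L C : ℝ} (hC : 0 ≤ C) (hΦ : ∀ ε > 0, |Φ ε| ≤ C / ε)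
    (hL : Tendsto Φ (nhdsWithin 0 (Set.Ioi 0)) (nhds L)) : ∃ M, ∀ ε > 0, |Φ ε| ≤ M := by
  have h1 : ∀ᶠ ε in nhdsWithin (0:ℝ) (Set.Ioi 0), |Φ ε| < |L| + 1 :=
    hL.abs.eventually_lt_const (by linarith)
  obtain ⟨e, he, h⟩ := mem_nhdsGT_iff_exists_Ioo_subset.1 h1
  have he' : (0:ℝ) < e := he
  refine ⟨max (|L| + 1) (C / e), fun ε hε => ?_⟩
  rcases lt_or_ge ε e with h' | h'
  · exact (le_of_lt (h ⟨hε, h'⟩)).trans (le_max_left _ _)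
  · refine ((hΦ ε hε).trans ?_).trans (le_max_right _ _)
    gcongr

lemma CT_re_tendsto {ρ : ℝ → ℝ} (hρ : Integrable ρ) (x L : ℝ)
    (hH : Tendsto (fun ε : ℝ => ∫ y in {y : ℝ | ε ≤ |x - y|}, ρ y / (x - y))
        (nhdsWithin 0 (Set.Ioi 0)) (nhds L)) :
    Tendsto (fun t : ℝ => (CT ρ (x + t * Complex.I)).re) (nhdsWithin 0 (Set.Ioi 0)) (nhds L) := by
  set Φ : ℝ → ℝ := fun ε : ℝ => ∫ y in {y : ℝ | ε ≤ |x - y|}, ρ y / (x - y) with hΦ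
  have hg : AEStronglyMeasurable (fun y => ρ y / (x - y)) := by
    simp only [div_eq_mul_inv]
    have : Measurable (fun y : ℝ => (x - y)⁻¹) := by fun_prop
    exact hρ.aestronglyMeasurable.mul this.aestronglyMeasurable
  have hms : ∀ ε : ℝ, MeasurableSet {y : ℝ | ε ≤ |x - y|} := fun ε =>
    measurableSet_le measurable_const (by fun_prop)
  obtain ⟨M, hM⟩ := bdd_of_tendsto (Φ := Φ) (C := ∫ y, |ρ y|)
    (integral_nonneg fun y => abs_nonneg _) (by
      intro ε hε
      rw [hΦ, ← integral_div]
      simp only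
      rw [← integral_indicator (hms ε), ← Real.norm_eq_abs]
      refine norm_integral_le_of_norm_le (hρ.abs.div_const ε) (Eventually.of_forall fun y => ?_)
      by_cases hy : ε ≤ |x - y|
      · rw [Set.indicator_of_mem (by exact hy), norm_div, Real.norm_eq_abs, Real.norm_eq_abs]
        gcongr
      · rw [Set.indicator_of_notMem (by exact hy), norm_zero]
        positivity) hH
  have hfub : ∀ t > 0, IntegrableOn (fun v => kk v * Φ (t * v)) (Set.Ioi 0) ∧
      ∫ v in Set.Ioi (0:ℝ), kk v * Φ (t * v) = (CT ρ (x + t * Complex.I)).re := by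
    intro t ht
    have hA : MeasurableSet {p : ℝ × ℝ | t * p.1 ≤ |x - p.2|} :=
      measurableSet_le (by fun_prop) (by fun_prop)
    have hc : ∀ y, ∫ v in Set.Ioi (0:ℝ), {p : ℝ × ℝ | t * p.1 ≤ |x - p.2|}.indicator
        (fun p => kk p.1) (v, y) = 1 - (1 + (|x - y| / t) ^ 2)⁻¹ := by
      intro y
      rw [← kk_Iic _ (by positivity)]
      congr 1
      ext v
      have h5 : (t * v ≤ |x - y|) ↔ (v ≤ |x - y| / t) := by rw [le_div_iff₀ ht, mul_comm]
      simp only [Set.indicator, Set.mem_ofPred_eq, Set.mem_Iic, h5]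
    have heq : ∀ y, ρ y / (x - y) * (1 - (1 + (|x - y| / t) ^ 2)⁻¹)
        = ρ y * ((x - y) / ((x - y) ^ 2 + t ^ 2)) := by
      intro y
      rw [div_pow, sq_abs]
      rcases eq_or_ne (x - y) 0 with h | h
      · simp [h]
      · have : (x - y) ^ 2 + t ^ 2 ≠ 0 := by positivity
        have : t ^ 2 + (x - y) ^ 2 ≠ 0 := by positivity
        field_simp
        ring
    have ht' : ((x : ℂ) + t * Complex.I).im ≠ 0 := by simp; exact ht.ne'
    have hi : Integrable fun y => ρ y / (x - y) * (1 - (1 + (|x - y| / t) ^ 2)⁻¹) := by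
      have := (CT_integrable hρ ht').re
      refine this.congr (Eventually.of_forall fun y => ?_)
      simp only
      rw [heq]
      simp only [RCLike.re_to_complex]
      rw [Complex.div_re, Complex.normSq_apply]
      simp
      ring
    have := fub hg hA hc hi
    have hI : ∀ v, ∫ y, {p : ℝ × ℝ | t * p.1 ≤ |x - p.2|}.indicator
        (fun p => ρ p.2 / (x - p.2)) (v, y) = Φ (t * v) := by
      intro v
      rw [hΦ]
      simp only
      rw [← integral_indicator (hms _)]
      rfl
    simp only [hI] at this
    refine ⟨this.1, this.2.trans ?_⟩
    rw [CT_re_eq hρ ht']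
    congr 1
    ext y
    rw [heq]
    simp
  have := abel_lim (w := kk) (kk_int 0 le_rfl) hM hH
    (fun t ht => (hfub t ht).1.aestronglyMeasurable)
  rw [kk_integral 0 le_rfl] at this
  simp only [ne_eq, OfNat.ofNat_ne_zero, not_false_eq_true, zero_pow, add_zero, inv_one,
    one_mul] at this
  refine this.congr' ?_
  filter_upwards [self_mem_nhdsWithin] with t ht using (hfub t ht).2

lemma CT_im_tendsto {f : ℝ → ℝ} (hf : Integrable f) :
    ∀ᵐ x : ℝ, Tendsto (fun t : ℝ => (CT f (x + t * Complex.I)).im) (nhdsWithin 0 (Set.Ioi 0))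
      (nhds (-(Real.pi * f x))) := by
  filter_upwards [IsUnifLocDoublingMeasure.ae_tendsto_average (μ := volume)
    hf.locallyIntegrable 1] with x hx
  have hL := hx (l := nhdsWithin (0:ℝ) (Set.Ioi 0)) (fun _ => x) (fun ε => ε) tendsto_id (by
    filter_upwards [self_mem_nhdsWithin] with t ht
    simp only [one_mul]
    exact Metric.mem_closedBall_self (le_of_lt ht))
  set Φ : ℝ → ℝ := fun ε => ⨍ y in Metric.closedBall x ε, f y with hΦ
  have hΦe : ∀ ε > 0, ∫ y in Metric.closedBall x ε, f y = 2 * ε * Φ ε := by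
    intro ε hε
    rw [hΦ]
    simp only
    rw [setAverage_eq, Measure.real, Real.volume_closedBall, ENNReal.toReal_ofReal (by positivity),
      smul_eq_mul]
    field_simp
  obtain ⟨M, hM⟩ := bdd_of_tendsto (Φ := Φ) (C := ∫ y, |f y|)
    (integral_nonneg fun y => abs_nonneg _) (by
      intro ε hε
      have h1 : |∫ y in Metric.closedBall x ε, f y| ≤ ∫ y, |f y| := by
        refine (abs_integral_le_integral_abs).trans ?_
        exact setIntegral_le_integral hf.abs (Eventually.of_forall fun y => abs_nonneg _)
      rw [hΦe ε hε, abs_mul, abs_of_pos (by positivity)] at h1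
      rw [le_div_iff₀ hε]
      nlinarith [abs_nonneg (Φ ε)]) hL
  have hfub : ∀ t > 0, IntegrableOn (fun v => kk v * (2 * v) * Φ (t * v)) (Set.Ioi 0) ∧
      ∫ v in Set.Ioi (0:ℝ), kk v * (2 * v) * Φ (t * v) = -(CT f (x + t * Complex.I)).im := by
    intro t ht
    have hA : MeasurableSet {p : ℝ × ℝ | |x - p.2| ≤ t * p.1} :=
      measurableSet_le (by fun_prop) (by fun_prop)
    have hc : ∀ y, ∫ v in Set.Ioi (0:ℝ), {p : ℝ × ℝ | |x - p.2| ≤ t * p.1}.indicator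
        (fun p => kk p.1) (v, y) = (1 + (|x - y| / t) ^ 2)⁻¹ := by
      intro y
      rw [← kk_Ici _ (by positivity)]
      congr 1
      ext v
      have h5 : (|x - y| ≤ t * v) ↔ (|x - y| / t ≤ v) := by rw [div_le_iff₀ ht, mul_comm]
      simp only [Set.indicator, Set.mem_ofPred_eq, Set.mem_Ici, h5]
    have heq : ∀ y, f y * (t / ((x - y) ^ 2 + t ^ 2)) = 1 / t * (f y * (1 + (|x - y| / t) ^ 2)⁻¹)
        := by
      intro y
      rw [div_pow, sq_abs]
      have : (x - y) ^ 2 + t ^ 2 ≠ 0 := by positivity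
      have : t ^ 2 + (x - y) ^ 2 ≠ 0 := by positivity
      field_simp
      ring
    have ht' : ((x : ℂ) + t * Complex.I).im ≠ 0 := by simp; exact ht.ne'
    have hi : Integrable fun y => f y * (1 + (|x - y| / t) ^ 2)⁻¹ := by
      refine hf.mul_bdd (c := 1) ?_ ?_
      · exact Measurable.aestronglyMeasurable (by fun_prop)
      · refine Eventually.of_forall fun y => ?_
        rw [Real.norm_eq_abs, abs_of_nonneg (by positivity)]
        apply inv_le_one_of_one_le₀
        have : 0 ≤ (|x - y| / t) ^ 2 := by positivity
        linarith
    have := fub hf.aestronglyMeasurable hA hc hi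
    have hI : ∀ v ∈ Set.Ioi (0:ℝ), kk v * ∫ y, {p : ℝ × ℝ | |x - p.2| ≤ t * p.1}.indicator
        (fun p => f p.2) (v, y) = t * (kk v * (2 * v) * Φ (t * v)) := by
      intro v hv
      have h1 := hΦe (t * v) (mul_pos ht hv)
      rw [← integral_indicator Metric.isClosed_closedBall.measurableSet] at h1
      have h2 : ∫ y, {p : ℝ × ℝ | |x - p.2| ≤ t * p.1}.indicator (fun p => f p.2) (v, y)
          = ∫ y, (Metric.closedBall x (t * v)).indicator f y := by
        congr 1
        ext y
        simp only [Set.indicator, Set.mem_ofPred_eq, Metric.mem_closedBall, Real.dist_eq]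
        rw [abs_sub_comm]
      rw [h2, h1]
      ring
    have h3 : IntegrableOn (fun v => t * (kk v * (2 * v) * Φ (t * v))) (Set.Ioi 0) :=
      this.1.congr_fun hI measurableSet_Ioi
    have h4 := this.2
    rw [setIntegral_congr_fun measurableSet_Ioi hI, integral_const_mul] at h4
    refine ⟨?_, ?_⟩
    · have := h3.const_mul (1 / t)
      refine this.congr (Eventually.of_forall fun v => ?_)
      simp only
      field_simp
    rw [CT_im_eq hf ht', neg_neg]
    have e1 : ∀ y, f y * (((x:ℂ) + t * Complex.I).im / ((((x:ℂ) + t * Complex.I).re - y) ^ 2 +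
      ((x:ℂ) + t * Complex.I).im ^ 2)) = 1 / t * (f y * (1 + (|x - y| / t) ^ 2)⁻¹) := by
      intro y
      rw [← heq]
      simp
    simp only [e1]
    rw [integral_const_mul, ← h4]
    rw [← mul_assoc, one_div_mul_cancel ht.ne', one_mul]
  have := abel_lim (w := fun v => kk v * (2 * v)) kk2_int hM hL
    (fun t ht => (hfub t ht).1.aestronglyMeasurable)
  rw [kk2_integral] at this
  refine this.neg.congr' ?_
  filter_upwards [self_mem_nhdsWithin] with t ht
  rw [(hfub t ht).2, neg_neg]

structure GoodQ (Q : ℂ → ℂ) : Prop where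
  hd : ∀ z : ℂ, z.im ≠ 0 → DifferentiableAt ℂ Q z
  hc : ∀ z : ℂ, z.im ≠ 0 → Q ((starRingEnd ℂ) z) = (starRingEnd ℂ) (Q z)
  hC : ∃ C : ℝ, 0 ≤ C ∧ ∀ z : ℂ, z.im ≠ 0 → z.im ^ 2 * ‖Q z‖ ≤ C * (1 + |z.im|)
  hs : ∀ ε : ℝ, 0 < ε → ∃ t0 : ℝ, 0 < t0 ∧ ∀ z : ℂ, z.im ≠ 0 → |z.im| < t0 →
    z.im ^ 2 * ‖Q z‖ ≤ ε
  ext : ∀ (x : ℝ) (E : ℂ → ℂ), AnalyticAt ℂ E x →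
    (∀ᶠ z in nhds (x : ℂ), z.im ≠ 0 → Q z = E z) → AnalyticAt ℂ Q x

lemma GoodQ.real_im {Q : ℂ → ℂ} (h : GoodQ Q) {x : ℝ} (hx : AnalyticAt ℂ Q x) :
    (Q x).im = 0 := by
  have hc := hx.continuousAt
  have e1 : Tendsto (fun t : ℝ => (x : ℂ) + t * Complex.I) (nhdsWithin 0 (Set.Ioi 0))
      (nhds (x : ℂ)) := by
    have : Continuous (fun t : ℝ => (x : ℂ) + t * Complex.I) := by fun_prop
    have := this.tendsto 0
    simp only [Complex.ofReal_zero, zero_mul, add_zero] at this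
    exact this.mono_left nhdsWithin_le_nhds
  have e2 : Tendsto (fun t : ℝ => (x : ℂ) - t * Complex.I) (nhdsWithin 0 (Set.Ioi 0))
      (nhds (x : ℂ)) := by
    have : Continuous (fun t : ℝ => (x : ℂ) - t * Complex.I) := by fun_prop
    have := this.tendsto 0
    simp only [Complex.ofReal_zero, zero_mul, sub_zero] at this
    exact this.mono_left nhdsWithin_le_nhds
  have h1 := (Complex.continuous_conj.tendsto _).comp (hc.tendsto.comp e1)
  have h2 := hc.tendsto.comp e2
  have h3 : Q x = (starRingEnd ℂ) (Q x) := by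
    refine tendsto_nhds_unique h2 (h1.congr' ?_)
    filter_upwards [self_mem_nhdsWithin] with t ht
    have ht : 0 < t := ht
    simp only [Function.comp]
    rw [← h.hc _ (by simp; exact ht.ne')]
    congr 1
    simp [sub_eq_add_neg]
  exact Complex.conj_eq_iff_im.1 h3.symm

lemma GoodQ.diff {Q : ℂ → ℂ} (h : GoodQ Q) {z : ℂ} (hz : z.im = 0 → AnalyticAt ℂ Q (z.re : ℂ)) :
    DifferentiableAt ℂ Q z := by
  by_cases h0 : z.im = 0
  · have e : ((z.re : ℝ) : ℂ) = z := Complex.ext (by simp) (by simp [h0])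
    have := hz h0
    rw [e] at this
    exact this.differentiableAt
  · exact h.hd z h0

lemma re_sub_abs_le (z : ℂ) (c : ℝ) : |z.re - c| ≤ ‖z - c‖ := by
  have := Complex.abs_re_le_norm (z - c)
  simpa using this

lemma GoodQ.lemA {Q : ℂ → ℂ} (h : GoodQ Q) {c r W : ℝ} (hr : 0 < r) (hW0 : 0 ≤ W)
    (hreg : ∀ y : ℝ, |y - c| ≤ r → AnalyticAt ℂ Q y)
    (hW : ∀ z : ℂ, z.im ≠ 0 → |z.im| ≤ r → z.im ^ 2 * ‖Q z‖ ≤ W) {w : ℂ}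
    (hw : ‖w - c‖ ≤ r) : ‖(w - c) ^ 2 - r ^ 2‖ ^ 2 * ‖Q w‖ ≤ 4 * r ^ 2 * W := by
  have hdiff : DifferentiableOn ℂ (fun w => ((w - c) ^ 2 - r ^ 2) ^ 2 * Q w)
      (Metric.closedBall (c : ℂ) r) := by
    intro z hz
    refine (DifferentiableAt.mul (by fun_prop) (h.diff fun _ => hreg _ ?_)).differentiableWithinAt
    rw [mem_closedBall_iff_norm] at hz
    exact (re_sub_abs_le z c).trans hz
  have := Complex.norm_le_of_forall_mem_frontier_norm_le (U := Metric.ball (c : ℂ) r)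
    (f := fun w => ((w - c) ^ 2 - r ^ 2) ^ 2 * Q w) Metric.isBounded_ball
    (DifferentiableOn.diffContOnCl (by rwa [closure_ball _ hr.ne'])) (C := 4 * r ^ 2 * W) (by
      rw [frontier_ball _ hr.ne']
      intro z hz
      rw [mem_sphere_iff_norm] at hz
      have hz2 : (z.re - c) ^ 2 + z.im ^ 2 = r ^ 2 := by
        rw [← hz, Complex.sq_norm, Complex.normSq_apply]
        simp
        ring
      have e : ‖(z - c) ^ 2 - (r : ℂ) ^ 2‖ ^ 2 = 4 * r ^ 2 * z.im ^ 2 := by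
        rw [Complex.sq_norm, Complex.normSq_apply]
        have e1 : ((z - c) ^ 2 - (r : ℂ) ^ 2).re = (z.re - c) ^ 2 - z.im ^ 2 - r ^ 2 := by
          simp [pow_two]
        have e2 : ((z - c) ^ 2 - (r : ℂ) ^ 2).im = 2 * (z.re - c) * z.im := by
          simp [pow_two]
          ring
        rw [e1, e2, ← hz2]
        ring
      rw [norm_mul, norm_pow, e]
      by_cases h0 : z.im = 0
      · rw [h0]; simp; positivity
      · have : |z.im| ≤ r := by
          have := CT_im_le z c
          rwa [hz] at this
        have := hW z h0 this
        calc 4 * r ^ 2 * z.im ^ 2 * ‖Q z‖ = 4 * r ^ 2 * (z.im ^ 2 * ‖Q z‖) := by ring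
          _ ≤ _ := by gcongr) (z := w) (by
        rw [closure_ball _ hr.ne', mem_closedBall_iff_norm]; exact hw)
  rwa [norm_mul, norm_pow] at this

lemma GoodQ.lemA' {Q : ℂ → ℂ} (h : GoodQ Q) {r W : ℝ} (hr : 0 < r) (hW0 : 0 ≤ W) {w : ℂ}
    (hreg : ∀ y : ℝ, |y - w.re| ≤ r → AnalyticAt ℂ Q y)
    (hW : ∀ z : ℂ, z.im ≠ 0 → |z.im| ≤ r → z.im ^ 2 * ‖Q z‖ ≤ W)
    (hw : |w.im| ≤ r) : ‖Q w‖ ≤ 4 * W / r ^ 2 := by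
  have e : w - w.re = w.im * Complex.I := by
    apply Complex.ext <;> simp
  have h1 := h.lemA hr hW0 hreg hW (w := w) (by rw [e]; simpa using hw)
  have h2 : r ^ 2 ≤ ‖(w - w.re) ^ 2 - (r : ℂ) ^ 2‖ := by
    have e : (w - w.re) ^ 2 - (r : ℂ) ^ 2 = ((-(w.im ^ 2 + r ^ 2) : ℝ) : ℂ) := by
      rw [e, mul_pow, Complex.I_sq]
      push_cast
      ring
    rw [e, Complex.norm_real, Real.norm_eq_abs, abs_neg]
    refine le_trans ?_ (le_abs_self _)
    nlinarith [sq_nonneg w.im]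
  have h3 : (r ^ 2) ^ 2 * ‖Q w‖ ≤ 4 * r ^ 2 * W := le_trans (by gcongr) h1
  rw [le_div_iff₀ (by positivity)]
  have : 0 < r ^ 2 := by positivity
  nlinarith

lemma GoodQ.lemC {Q : ℂ → ℂ} (h : GoodQ Q) {x d W τ : ℝ} (hd : 0 < d) (hW0 : 0 ≤ W)
    (hreg : ∀ y : ℝ, |y - x| < d → AnalyticAt ℂ Q y)
    (hW : ∀ z : ℂ, z.im ≠ 0 → |z.im| ≤ d → z.im ^ 2 * ‖Q z‖ ≤ W)
    (hτ : 0 < τ) (hτd : τ ≤ d / 4) : |(Q (x + τ * Complex.I)).im| ≤ 64 * W * τ / d ^ 3 := by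
  have hb : ∀ w ∈ Metric.ball (x : ℂ) (d / 2), ‖Q w‖ ≤ 16 * W / d ^ 2 := by
    intro w hw
    rw [mem_ball_iff_norm] at hw
    have h1 := re_sub_abs_le w x
    have h2 := CT_im_le w x
    have := h.lemA' (r := d / 2) (by positivity) hW0 (w := w) (fun y hy => hreg y (by
      have := abs_sub_le y w.re x
      linarith)) (fun z hz hz' => hW z hz (by linarith)) (by linarith)
    refine this.trans (le_of_eq ?_)
    field_simp
    ring
  have := Complex.dist_le_div_mul_dist_of_mapsTo_ball (f := Q) (c := (x : ℂ)) (R₁ := d / 2)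
    (R₂ := 32 * W / d ^ 2) (z := x + τ * Complex.I) (by
      intro z hz
      refine (h.diff fun _ => hreg _ ?_).differentiableWithinAt
      rw [mem_ball_iff_norm] at hz
      have := re_sub_abs_le z x
      linarith) (by
      intro z hz
      rw [mem_closedBall_iff_norm]
      have h1 := hb z hz
      have h2 := hb x (Metric.mem_ball_self (by positivity))
      have := norm_sub_le (Q z) (Q x)
      have e : 32 * W / d ^ 2 = 16 * W / d ^ 2 + 16 * W / d ^ 2 := by ring
      linarith) (by
      rw [mem_ball_iff_norm]
      simp [abs_of_pos hτ]
      linarith)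
  rw [dist_eq_norm, dist_eq_norm] at this
  have h1 := Complex.abs_im_le_norm (Q (x + τ * Complex.I) - Q x)
  rw [Complex.sub_im, h.real_im (hreg x (by simpa using hd)), sub_zero] at h1
  refine (h1.trans this).trans (le_of_eq ?_)
  simp [abs_of_pos hτ]
  field_simp
  ring

lemma inv_sq_im (z : ℂ) : ((z ^ 2)⁻¹).im = -(2 * z.re * z.im / (z.re ^ 2 + z.im ^ 2) ^ 2) := by
  rw [Complex.inv_im, map_pow, Complex.normSq_apply]
  simp [pow_two]
  ring

lemma bb_le {p q : ℝ} (hq : 0 < q) : 2 * p * q / (p ^ 2 + q ^ 2) ^ 2 ≤ 1 / q ^ 2 := by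
  rw [div_le_div_iff₀ (by positivity) (by positivity)]
  nlinarith [sq_nonneg (p - q), sq_nonneg p, sq_nonneg q, mul_pos hq hq, sq_nonneg (p^2),
    mul_nonneg (sq_nonneg p) (sq_nonneg q), mul_nonneg (sq_nonneg (p-q)) (sq_nonneg q)]

lemma bb_nonneg {p q : ℝ} (hp : 0 ≤ p) (hq : 0 < q) : 0 ≤ 2 * p * q / (p ^ 2 + q ^ 2) ^ 2 := by
  positivity

lemma bb_low1 {d τ : ℝ} (hd : 0 ≤ d) (hτ : 0 < τ) (h : d ≤ 4 * τ) :
    1 / τ ^ 2 ≤ 1000 * (2 * (d + τ) * (2 * τ) / ((d + τ) ^ 2 + (2 * τ) ^ 2) ^ 2) := by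
  rw [← mul_div_assoc, div_le_div_iff₀ (by positivity) (by positivity)]
  have h1 : (d + τ) ^ 2 + (2 * τ) ^ 2 ≤ 29 * τ ^ 2 := by nlinarith
  have h2 : ((d + τ) ^ 2 + (2 * τ) ^ 2) ^ 2 ≤ (29 * τ ^ 2) ^ 2 := by gcongr
  have h3 : τ ^ 4 ≤ (d + τ) * τ ^ 3 := by
    have : 0 ≤ d * τ ^ 3 := by positivity
    nlinarith
  have h4 : 0 < τ ^ 4 := by positivity
  nlinarith

lemma bb_low2 {d τ : ℝ} (hτ : 0 < τ) (h : 4 * τ ≤ d) :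
    64 * τ / d ^ 3 ≤ 1000 * (2 * (d + τ) * (2 * τ) / ((d + τ) ^ 2 + (2 * τ) ^ 2) ^ 2) := by
  have hd : 0 < d := by linarith
  rw [← mul_div_assoc, div_le_div_iff₀ (by positivity) (by positivity)]
  have h1 : (d + τ) ^ 2 + (2 * τ) ^ 2 ≤ 2 * d ^ 2 := by nlinarith
  have h2 : ((d + τ) ^ 2 + (2 * τ) ^ 2) ^ 2 ≤ (2 * d ^ 2) ^ 2 := by gcongr
  have h3 : 0 ≤ τ * τ * d ^ 3 := by positivity
  have h4 : 0 ≤ τ * d ^ 4 := by positivity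
  calc 64 * τ * ((d + τ) ^ 2 + (2 * τ) ^ 2) ^ 2 ≤ 64 * τ * (2 * d ^ 2) ^ 2 := by gcongr
    _ ≤ _ := by nlinarith

lemma GoodQ.bottom {Q : ℂ → ℂ} (h : GoodQ Q) {α β ε : ℝ}
    (hreg : ∀ y : ℝ, α < y → y < β → AnalyticAt ℂ Q y) (hε : 0 < ε) :
    ∃ τ0 : ℝ, 0 < τ0 ∧ ∀ τ : ℝ, 0 < τ → τ < τ0 → ∀ x : ℝ, α < x → x < β →
      |(Q (x + τ * Complex.I)).im| ≤ ε +
        1000 * ε * (2 * (x - α + τ) * (2 * τ) / ((x - α + τ) ^ 2 + (2 * τ) ^ 2) ^ 2) +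
        1000 * ε * (2 * (β - x + τ) * (2 * τ) / ((β - x + τ) ^ 2 + (2 * τ) ^ 2) ^ 2) := by
  obtain ⟨t1, ht1, hs⟩ := h.hs ε hε
  set t2 := t1 / 2 with ht2
  have ht2' : 0 < t2 := by positivity
  refine ⟨min (t2 / 4) (t2 ^ 3 / 64), by positivity, fun τ hτ hτ0 x hxα hxβ => ?_⟩
  have hτ1 : τ < t2 / 4 := hτ0.trans_le (min_le_left _ _)
  have hτ2 : τ < t2 ^ 3 / 64 := hτ0.trans_le (min_le_right _ _)
  have b1 : 0 ≤ 2 * (x - α + τ) * (2 * τ) / ((x - α + τ) ^ 2 + (2 * τ) ^ 2) ^ 2 :=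
    bb_nonneg (by linarith) (by linarith)
  have b2 : 0 ≤ 2 * (β - x + τ) * (2 * τ) / ((β - x + τ) ^ 2 + (2 * τ) ^ 2) ^ 2 :=
    bb_nonneg (by linarith) (by linarith)
  obtain ⟨d, hd0, hdα, hdβ, hdb⟩ : ∃ d > 0, d ≤ x - α ∧ d ≤ β - x ∧
      2 * (d + τ) * (2 * τ) / ((d + τ) ^ 2 + (2 * τ) ^ 2) ^ 2 ≤
      2 * (x - α + τ) * (2 * τ) / ((x - α + τ) ^ 2 + (2 * τ) ^ 2) ^ 2 +
      2 * (β - x + τ) * (2 * τ) / ((β - x + τ) ^ 2 + (2 * τ) ^ 2) ^ 2 := by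
    rcases le_total (x - α) (β - x) with h' | h'
    · exact ⟨x - α, by linarith, le_rfl, h', by linarith⟩
    · exact ⟨β - x, by linarith, h', le_rfl, by linarith⟩
  have hregd : ∀ y : ℝ, |y - x| < d → AnalyticAt ℂ Q y := by
    intro y hy
    rw [abs_lt] at hy
    exact hreg y (by linarith) (by linarith)
  suffices |(Q (x + τ * Complex.I)).im| ≤ ε +
      ε * (1000 * (2 * (d + τ) * (2 * τ) / ((d + τ) ^ 2 + (2 * τ) ^ 2) ^ 2)) by
    nlinarith
  have b0 : 0 ≤ 2 * (d + τ) * (2 * τ) / ((d + τ) ^ 2 + (2 * τ) ^ 2) ^ 2 :=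
    bb_nonneg (by linarith) (by linarith)
  rcases le_total d (4 * τ) with h1 | h1
  · have := hs (x + τ * Complex.I) (by simp; exact hτ.ne') (by simp [abs_of_pos hτ]; linarith)
    have e : ((x : ℂ) + τ * Complex.I).im = τ := by simp
    rw [e] at this
    have h2 := Complex.abs_im_le_norm (Q (x + τ * Complex.I))
    have h3 : ‖Q (x + τ * Complex.I)‖ ≤ ε * (1 / τ ^ 2) := by
      rw [mul_one_div, le_div_iff₀ (by positivity)]
      linarith
    have h4 := mul_le_mul_of_nonneg_left (bb_low1 hd0.le hτ h1) hε.le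
    linarith
  · rcases le_total d t2 with h2 | h2
    · have := h.lemC (W := ε) hd0 hε.le hregd (fun z hz hz' => hs z hz (by linarith)) hτ
        (by linarith)
      have h4 := mul_le_mul_of_nonneg_left (bb_low2 hτ h1) hε.le
      have e : 64 * ε * τ / d ^ 3 = ε * (64 * τ / d ^ 3) := by ring
      linarith
    · have := h.lemC (W := ε) ht2' hε.le (fun y hy => hregd y (by linarith))
        (fun z hz hz' => hs z hz (by linarith)) hτ (by linarith)
      have e : 64 * ε * τ / t2 ^ 3 ≤ ε := by
        rw [div_le_iff₀ (by positivity)]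
        nlinarith
      nlinarith

lemma GoodQ.PLaux {Q : ℂ → ℂ} (h : GoodQ Q) {g : ℝ → ℝ} (hg : Integrable g)
    (hg0 : ∀ w : ℂ, 0 < w.im → (CT g w).im ≤ 0) {α β C0 s : ℝ} (hC0 : 0 ≤ C0)
    (hreg : ∀ y : ℝ, α < y → y < β → AnalyticAt ℂ Q y) (hs : |s| = 1)
    (hα : ∀ t : ℝ, 0 < t → t ≤ 1 → |(Q (α + t * Complex.I)).im| ≤
      -(CT g (α + t * Complex.I)).im + C0)
    (hβ : ∀ t : ℝ, 0 < t → t ≤ 1 → |(Q (β + t * Complex.I)).im| ≤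
      -(CT g (β + t * Complex.I)).im + C0)
    (htop : ∀ x : ℝ, α ≤ x → x ≤ β → |(Q (x + Complex.I)).im| ≤ C0)
    {w0 : ℂ} (h1 : α < w0.re) (h2 : w0.re < β) (h3 : 0 < w0.im) (h4 : w0.im < 1)
    {ε : ℝ} (hε : 0 < ε) :
    s * (Q w0).im ≤ -(CT g w0).im + C0 + ε * (1 + 2000 / w0.im ^ 2) := by
  obtain ⟨τ0, hτ0, hbot⟩ := h.bottom hreg hε
  obtain ⟨τ, hτ, hτ'⟩ : ∃ τ, 0 < τ ∧ τ < min τ0 w0.im := exists_between (by positivity)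
  have hτ1 : τ < τ0 := hτ'.trans_le (min_le_left _ _)
  have hτ2 : τ < w0.im := hτ'.trans_le (min_le_right _ _)
  set Ba : ℂ → ℂ := fun w => ((w - α + τ * (1 + Complex.I)) ^ 2)⁻¹ with hBa
  set Bb : ℂ → ℂ := fun w => ((w - β - τ * (1 - Complex.I)) ^ 2)⁻¹ with hBb
  have hBai : ∀ w, (Ba w).im = -(2 * (w.re - α + τ) * (w.im + τ) /
      ((w.re - α + τ) ^ 2 + (w.im + τ) ^ 2) ^ 2) := by
    intro w
    rw [hBa]
    simp only
    rw [inv_sq_im]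
    simp
  have hBbi : ∀ w, (Bb w).im = 2 * (β - w.re + τ) * (w.im + τ) /
      ((β - w.re + τ) ^ 2 + (w.im + τ) ^ 2) ^ 2 := by
    intro w
    rw [hBb]
    simp only
    rw [inv_sq_im]
    simp
    rw [← neg_div]
    congr 1
    · ring
    · ring
  set Ψ : ℂ → ℂ := fun w => s * Q w + CT g w + (1000 * ε : ℝ) * (Ba w - Bb w) with hΨ
  have hΨi : ∀ w, (Ψ w).im = s * (Q w).im + (CT g w).im + 1000 * ε * ((Ba w).im - (Bb w).im) := by
    intro w
    rw [hΨ]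
    simp only [Complex.add_im, Complex.im_ofReal_mul, Complex.sub_im]
  have hΨd : ∀ w : ℂ, 0 < w.im → DifferentiableAt ℂ Ψ w := by
    intro w hw
    have d1 : DifferentiableAt ℂ Ba w := by
      refine DifferentiableAt.inv (by fun_prop) (pow_ne_zero 2 fun h0 => ?_)
      have := congrArg Complex.im h0
      simp at this
      linarith
    have d2 : DifferentiableAt ℂ Bb w := by
      refine DifferentiableAt.inv (by fun_prop) (pow_ne_zero 2 fun h0 => ?_)
      have := congrArg Complex.im h0
      simp at this
      linarith
    exact (((h.hd w hw.ne').const_mul _).add (CT_hasDerivAt hg hw.ne')).add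
      ((d1.sub d2).const_mul _)
  have hle : ∀ u : ℝ, s * u ≤ |u| := by
    intro u
    have := le_abs_self (s * u)
    rwa [abs_mul, hs, one_mul] at this
  have hfr : ∀ w : ℂ, α ≤ w.re → w.re ≤ β → τ ≤ w.im → w.im ≤ 1 →
      (w.re = α ∨ w.re = β ∨ w.im = τ ∨ w.im = 1) → (Ψ w).im ≤ C0 + ε := by
    intro w hw1 hw2 hw3 hw4 hw
    have hw0 : 0 < w.im := by linarith
    have hN := hg0 w hw0
    have ew : (w.re : ℂ) + w.im * Complex.I = w := Complex.re_add_im w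
    rw [hΨi, hBai, hBbi]
    have b1 := bb_nonneg (p := w.re - α + τ) (q := w.im + τ) (by linarith) (by linarith)
    have b2 := bb_nonneg (p := β - w.re + τ) (q := w.im + τ) (by linarith) (by linarith)
    have b1' := mul_nonneg hε.le b1
    have b2' := mul_nonneg hε.le b2
    have hq := hle (Q w).im
    suffices |(Q w).im| ≤ -(CT g w).im + C0 + ε + 1000 * ε * (2 * (w.re - α + τ) * (w.im + τ) /
      ((w.re - α + τ) ^ 2 + (w.im + τ) ^ 2) ^ 2) + 1000 * ε * (2 * (β - w.re + τ) * (w.im + τ) /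
      ((β - w.re + τ) ^ 2 + (w.im + τ) ^ 2) ^ 2) by linarith
    by_cases c1 : w.re = α
    · have := hα w.im hw0 hw4
      rw [← c1, ew] at this
      linarith
    by_cases c2 : w.re = β
    · have := hβ w.im hw0 hw4
      rw [← c2, ew] at this
      linarith
    by_cases c4 : w.im = 1
    · have := htop w.re hw1 hw2
      have ew' : (w.re : ℂ) + Complex.I = w := by
        rw [← ew, c4]; simp
      rw [ew'] at this
      linarith
    have c3 : w.im = τ := by tauto
    have := hbot τ hτ hτ1 w.re (lt_of_le_of_ne hw1 (Ne.symm c1)) (lt_of_le_of_ne hw2 c2)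
    rw [← c3, ew] at this
    have e : w.im + w.im = 2 * w.im := by ring
    rw [← c3, e]
    linarith
  have hmax := Complex.norm_le_of_forall_mem_frontier_norm_le
    (U := (Set.Ioo α β) ×ℂ (Set.Ioo τ 1)) (f := fun w => Complex.exp (-Complex.I * Ψ w))
    ((Metric.isBounded_Ioo _ _).reProdIm (Metric.isBounded_Ioo _ _))
    (DifferentiableOn.diffContOnCl (by
      rw [Complex.closure_reProdIm, closure_Ioo (by linarith), closure_Ioo (by linarith)]
      intro w hw
      rw [Complex.mem_reProdIm] at hw
      have := (Set.mem_Icc.1 hw.2).1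
      exact ((hΨd w (by linarith)).const_mul _).cexp.differentiableWithinAt))
    (C := Real.exp (C0 + ε)) (by
      intro w hw
      rw [Complex.frontier_reProdIm, closure_Ioo (by linarith), closure_Ioo (by linarith),
        frontier_Ioo (by linarith), frontier_Ioo (by linarith)] at hw
      rw [Complex.norm_exp]
      apply Real.exp_le_exp.2
      have e : (-Complex.I * Ψ w).re = (Ψ w).im := by simp
      rw [e]
      rcases hw with hw | hw <;> rw [Complex.mem_reProdIm] at hw
      · obtain ⟨a, b⟩ := hw
        rw [Set.mem_Icc] at a
        rcases b with b | b
        · exact hfr w a.1 a.2 (by rw [b]) (by rw [b]; linarith) (by tauto)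
        · rw [Set.mem_singleton_iff] at b
          exact hfr w a.1 a.2 (by rw [b]; linarith) (by rw [b]) (by tauto)
      · obtain ⟨a, b⟩ := hw
        rw [Set.mem_Icc] at b
        rcases a with a | a
        · exact hfr w (by rw [a]) (by rw [a]; linarith) b.1 b.2 (by tauto)
        · rw [Set.mem_singleton_iff] at a
          exact hfr w (by rw [a]; linarith) (by rw [a]) b.1 b.2 (by tauto))
    (z := w0) (subset_closure (by
      rw [Complex.mem_reProdIm]
      exact ⟨Set.mem_Ioo.2 ⟨h1, h2⟩, Set.mem_Ioo.2 ⟨hτ2, h4⟩⟩))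
  rw [Complex.norm_exp, Real.exp_le_exp] at hmax
  have e : (-Complex.I * Ψ w0).re = (Ψ w0).im := by simp
  rw [e, hΨi, hBai, hBbi] at hmax
  have hq : 0 < w0.im + τ := by linarith
  have b1 := bb_le (p := w0.re - α + τ) hq
  have b2 := bb_le (p := β - w0.re + τ) hq
  have b3 : 1 / (w0.im + τ) ^ 2 ≤ 1 / w0.im ^ 2 := by gcongr; linarith
  have b4 := mul_le_mul_of_nonneg_left (b1.trans b3) hε.le
  have b5 := mul_le_mul_of_nonneg_left (b2.trans b3) hε.le
  have e5 : ε * (1 + 2000 / w0.im ^ 2) = ε + 1000 * (ε * (1 / w0.im ^ 2)) +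
    1000 * (ε * (1 / w0.im ^ 2)) := by ring
  rw [e5]
  linarith

lemma GoodQ.PL {Q : ℂ → ℂ} (h : GoodQ Q) {g : ℝ → ℝ} (hg : Integrable g)
    (hg0 : ∀ w : ℂ, 0 < w.im → (CT g w).im ≤ 0) {α β C0 : ℝ} (hC0 : 0 ≤ C0)
    (hreg : ∀ y : ℝ, α < y → y < β → AnalyticAt ℂ Q y)
    (hα : ∀ t : ℝ, 0 < t → t ≤ 1 → |(Q (α + t * Complex.I)).im| ≤
      -(CT g (α + t * Complex.I)).im + C0)
    (hβ : ∀ t : ℝ, 0 < t → t ≤ 1 → |(Q (β + t * Complex.I)).im| ≤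
      -(CT g (β + t * Complex.I)).im + C0)
    (htop : ∀ x : ℝ, α ≤ x → x ≤ β → |(Q (x + Complex.I)).im| ≤ C0)
    {x t : ℝ} (h1 : α < x) (h2 : x < β) (h3 : 0 < t) (h4 : t < 1) :
    |(Q (x + t * Complex.I)).im| ≤ -(CT g (x + t * Complex.I)).im + C0 := by
  have key : ∀ s : ℝ, |s| = 1 → s * (Q (x + t * Complex.I)).im ≤
      -(CT g (x + t * Complex.I)).im + C0 := by
    intro s hs
    refine le_of_forall_pos_le_add fun ε hε => ?_
    have hp : 0 < 1 + 2000 / t ^ 2 := by positivity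
    have := h.PLaux hg hg0 hC0 hreg hs hα hβ htop (w0 := x + t * Complex.I) (by simpa)
      (by simpa) (by simpa) (by simpa) (div_pos hε hp)
    have e : ((x : ℂ) + t * Complex.I).im = t := by simp
    rwa [e, div_mul_cancel₀ _ hp.ne'] at this
  rw [abs_le']
  constructor
  · simpa using key 1 (by simp)
  · simpa using key (-1) (by simp)

lemma path_int {f : ℂ → ℂ} {c : ℂ} {R : ℝ} (hf : DifferentiableOn ℂ f (Metric.ball c R)) :
    ∃ F : ℂ → ℂ, ∀ (γ γ' : ℝ → ℂ) (s e : ℝ), s ≤ e → (∀ u, HasDerivAt γ (γ' u) u) →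
      Continuous γ' → (∀ u, s ≤ u → u ≤ e → γ u ∈ Metric.ball c R) →
      ∫ u in s..e, γ' u * f (γ u) = F (γ e) - F (γ s) := by
  obtain ⟨F, hF⟩ := hf.isExactOn_ball
  refine ⟨F, fun γ γ' s e hse hγ hγ' hm => ?_⟩
  have hm' : ∀ u ∈ Set.uIcc s e, γ u ∈ Metric.ball c R := by
    intro u hu
    rw [Set.uIcc_of_le hse, Set.mem_Icc] at hu
    exact hm u hu.1 hu.2
  refine intervalIntegral.integral_eq_sub_of_hasDerivAt (f := F ∘ γ) (fun u hu => ?_) ?_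
  · have := (hF _ (hm' u hu)).scomp u (hγ u)
    simpa using this
  · refine ContinuousOn.intervalIntegrable ?_
    refine hγ'.continuousOn.mul (hf.continuousOn.comp ?_ hm')
    exact (continuous_iff_continuousAt.2 fun u => (hγ u).continuousAt).continuousOn

lemma arc_up {f : ℂ → ℂ} {a r τ : ℝ} (hr : 0 < r) (hτ : 0 < τ)
    (hf : DifferentiableOn ℂ f {z | -τ < z.im}) :
    ∫ θ in (0:ℝ)..Real.pi, circleMap 0 r θ * Complex.I * f (circleMap a r θ) =
      -∫ x in (a - r)..(a + r), f (x : ℂ) := by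
  set K := r ^ 2 / τ + 1 with hK
  have hK0 : 0 < K := by positivity
  have hKr : r ^ 2 < 2 * K * τ + τ ^ 2 := by
    have : K * τ = r ^ 2 + τ := by rw [hK]; field_simp
    nlinarith [sq_nonneg τ]
  have hsub : Metric.ball ((a : ℂ) + K * Complex.I) (K + τ) ⊆ {z : ℂ | -τ < z.im} := by
    intro z hz
    rw [mem_ball_iff_norm] at hz
    have := Complex.abs_im_le_norm (z - ((a : ℂ) + K * Complex.I))
    simp at this
    have := (abs_le.1 this).1
    show -τ < z.im
    linarith
  have hmem : ∀ z : ℂ, ‖z - a‖ ≤ r → 0 ≤ z.im →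
      z ∈ Metric.ball ((a : ℂ) + K * Complex.I) (K + τ) := by
    intro z hz hz0
    rw [mem_ball_iff_norm]
    apply lt_of_pow_lt_pow_left₀ 2 (by positivity)
    have h1 : ‖z - a‖ ^ 2 ≤ r ^ 2 := by gcongr
    rw [Complex.sq_norm, Complex.normSq_apply] at h1 ⊢
    simp at h1 ⊢
    nlinarith [mul_nonneg hK0.le hz0]
  obtain ⟨F, hF⟩ := path_int (hf.mono hsub)
  have h1 := hF (circleMap a r) (fun θ => circleMap 0 r θ * Complex.I) 0 Real.pi Real.pi_pos.le
    (fun θ => hasDerivAt_circleMap _ _ _) (by fun_prop) (fun u h0 h1 => hmem _ (by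
      simp [circleMap, abs_of_pos hr]) (by
      have := Real.sin_nonneg_of_nonneg_of_le_pi h0 h1
      simp [circleMap, Complex.exp_im]
      positivity))
  have h2 := hF (fun x : ℝ => (x : ℂ)) (fun _ => 1) (a - r) (a + r) (by linarith)
    (fun x => Complex.ofRealCLM.hasDerivAt) (by fun_prop) (fun u h0 h1 => hmem _ (by
      rw [← Complex.ofReal_sub, Complex.norm_real, Real.norm_eq_abs, abs_le]
      constructor <;> linarith) (by simp))
  simp only [one_mul] at h2
  rw [h1, h2]
  simp [circleMap]
  ring_nf

lemma arc_down {f : ℂ → ℂ} {a r τ : ℝ} (hr : 0 < r) (hτ : 0 < τ)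
    (hf : DifferentiableOn ℂ f {z | z.im < τ}) :
    ∫ θ in Real.pi..(2 * Real.pi), circleMap 0 r θ * Complex.I * f (circleMap a r θ) =
      ∫ x in (a - r)..(a + r), f (x : ℂ) := by
  set K := r ^ 2 / τ + 1 with hK
  have hK0 : 0 < K := by positivity
  have hKr : r ^ 2 < 2 * K * τ + τ ^ 2 := by
    have : K * τ = r ^ 2 + τ := by rw [hK]; field_simp
    nlinarith [sq_nonneg τ]
  have hsub : Metric.ball ((a : ℂ) - K * Complex.I) (K + τ) ⊆ {z : ℂ | z.im < τ} := by
    intro z hz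
    rw [mem_ball_iff_norm] at hz
    have := Complex.abs_im_le_norm (z - ((a : ℂ) - K * Complex.I))
    simp at this
    have := (abs_le.1 this).2
    show z.im < τ
    linarith
  have hmem : ∀ z : ℂ, ‖z - a‖ ≤ r → z.im ≤ 0 →
      z ∈ Metric.ball ((a : ℂ) - K * Complex.I) (K + τ) := by
    intro z hz hz0
    rw [mem_ball_iff_norm]
    apply lt_of_pow_lt_pow_left₀ 2 (by positivity)
    have h1 : ‖z - a‖ ^ 2 ≤ r ^ 2 := by gcongr
    rw [Complex.sq_norm, Complex.normSq_apply] at h1 ⊢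
    simp at h1 ⊢
    nlinarith [mul_nonneg hK0.le (neg_nonneg.2 hz0)]
  obtain ⟨F, hF⟩ := path_int (hf.mono hsub)
  have h1 := hF (circleMap a r) (fun θ => circleMap 0 r θ * Complex.I) Real.pi (2 * Real.pi)
    (by linarith [Real.pi_pos])
    (fun θ => hasDerivAt_circleMap _ _ _) (by fun_prop) (fun u h0 h1 => hmem _ (by
      simp [circleMap, abs_of_pos hr]) (by
      have := Real.sin_nonneg_of_nonneg_of_le_pi (x := u - Real.pi) (by linarith) (by linarith)
      rw [Real.sin_sub_pi] at this
      simp [circleMap, Complex.exp_im]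
      nlinarith))
  have h2 := hF (fun x : ℝ => (x : ℂ)) (fun _ => 1) (a - r) (a + r) (by linarith)
    (fun x => Complex.ofRealCLM.hasDerivAt) (by fun_prop) (fun u h0 h1 => hmem _ (by
      rw [← Complex.ofReal_sub, Complex.norm_real, Real.norm_eq_abs, abs_le]
      constructor <;> linarith) (by simp))
  simp only [one_mul] at h2
  rw [h1, h2]
  simp [circleMap]
  ring_nf

noncomputable def qq (φ : ℂ → ℂ) (w c : ℂ) (z : ℂ) : ℂ :=
  if z = w then deriv φ w else (z - w)⁻¹ * (φ z - c)

lemma qq_diff {φ : ℂ → ℂ} {U : Set ℂ} (hU : IsOpen U) (hφ : DifferentiableOn ℂ φ U) {w c : ℂ}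
    (hc : w ∈ U → c = φ w) : DifferentiableOn ℂ (qq φ w c) U := by
  by_cases hw : w ∈ U
  · have e : qq φ w c = dslope φ w := by
      ext z
      by_cases h : z = w
      · simp [qq, h]
      · simp [qq, h, dslope_of_ne _ h, slope_def_field, hc hw, div_eq_inv_mul]
    rw [e]
    exact (Complex.differentiableOn_dslope (hU.mem_nhds hw)).2 hφ
  · intro z hz
    have hzw : z ≠ w := fun h => hw (h ▸ hz)
    have : DifferentiableAt ℂ (fun z => (z - w)⁻¹ * (φ z - c)) z := by
      refine DifferentiableAt.mul (DifferentiableAt.inv (by fun_prop) (sub_ne_zero.2 hzw)) ?_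
      exact ((hφ z hz).differentiableAt (hU.mem_nhds hz)).sub_const c
    refine (this.congr_of_eventuallyEq ?_).differentiableWithinAt
    filter_upwards [isOpen_ne.mem_nhds hzw] with y hy
    simp only [qq]
    rw [if_neg hy]

noncomputable def ppol (a r : ℝ) (z : ℂ) : ℂ := ((z - a) ^ 2 - r ^ 2) ^ 2

lemma ppol_circle {a r : ℝ} {z : ℂ} (hz : ‖z - a‖ = r) : ‖ppol a r z‖ = 4 * r ^ 2 * z.im ^ 2 := by
  have hz2 : (z.re - a) ^ 2 + z.im ^ 2 = r ^ 2 := by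
    rw [← hz, Complex.sq_norm, Complex.normSq_apply]
    simp
    ring
  rw [ppol, norm_pow, Complex.sq_norm, Complex.normSq_apply]
  have e1 : ((z - a) ^ 2 - (r : ℂ) ^ 2).re = (z.re - a) ^ 2 - z.im ^ 2 - r ^ 2 := by
    simp [pow_two]
  have e2 : ((z - a) ^ 2 - (r : ℂ) ^ 2).im = 2 * (z.re - a) * z.im := by
    simp [pow_two]
    ring
  rw [e1, e2, ← hz2]
  ring

lemma ppol_diff (a r : ℝ) : Differentiable ℂ (ppol a r) := by
  unfold ppol; fun_prop

noncomputable def TT (Q : ℂ → ℂ) (a r t : ℝ) (z : ℂ) : ℂ :=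
  ppol a r z * (if z.im = 0 then 0 else Q (z + (if 0 < z.im then t else -t : ℝ) * Complex.I))

lemma shift_im (z : ℂ) (t : ℝ) (hz : z.im ≠ 0) (ht : 0 ≤ t) :
    |(z + (if 0 < z.im then t else -t : ℝ) * Complex.I).im| = |z.im| + t := by
  rcases lt_or_gt_of_ne hz with h | h
  · rw [if_neg (by linarith)]
    simp
    rw [abs_of_neg h, abs_of_nonpos (by linarith)]
    ring
  · rw [if_pos h]
    simp
    rw [abs_of_pos h, abs_of_nonneg (by linarith)]

lemma GoodQ.TT_meas {Q : ℂ → ℂ} (h : GoodQ Q) (a r t : ℝ) (ht : 0 ≤ t) :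
    Measurable (TT Q a r t) := by
  have hset : MeasurableSet {z : ℂ | z.im = 0} :=
    measurableSet_eq_fun Complex.measurable_im measurable_const
  have hset2 : MeasurableSet {z : ℂ | 0 < z.im} :=
    measurableSet_lt measurable_const Complex.measurable_im
  classical
  have hQ : Measurable ({z : ℂ | z.im = 0}.piecewise (fun _ => 0) Q) := by
    refine ContinuousOn.measurable_piecewise continuousOn_const ?_ hset
    intro z hz
    exact (h.hd z hz).continuousAt.continuousWithinAt
  have e : TT Q a r t = fun z => ppol a r z * (if z.im = 0 then 0 else
      {z : ℂ | z.im = 0}.piecewise (fun _ => 0) Q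
        (z + (if 0 < z.im then t else -t : ℝ) * Complex.I)) := by
    ext z
    unfold TT
    by_cases hz : z.im = 0
    · simp [hz]
    · have := shift_im z t hz ht
      have h0 : (z + (if 0 < z.im then t else -t : ℝ) * Complex.I).im ≠ 0 := by
        rw [← abs_pos, this]
        have := abs_pos.2 hz
        linarith
      rw [if_neg hz, if_neg hz, Set.piecewise_eq_of_notMem {z : ℂ | z.im = 0} _ _ (show _ ∉ {z : ℂ | z.im = 0} from h0)]
  rw [e]
  refine (ppol_diff a r).continuous.measurable.mul (Measurable.ite hset measurable_const ?_)
  refine hQ.comp (measurable_id.add (Measurable.mul_const ?_ _))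
  refine Complex.measurable_ofReal.comp (Measurable.ite hset2 measurable_const measurable_const)

lemma GoodQ.TT_bound {Q : ℂ → ℂ} (h : GoodQ Q) (a r : ℝ) (hr : 0 < r) :
    ∃ B, ∀ t, 0 ≤ t → t ≤ 1 → ∀ z : ℂ, ‖z - a‖ = r → ‖TT Q a r t z‖ ≤ B := by
  obtain ⟨C, hC0, hC⟩ := h.hC
  refine ⟨4 * r ^ 2 * (C * (2 + r)), fun t h0 h1 z hz => ?_⟩
  rw [TT, norm_mul, ppol_circle hz]
  by_cases hi : z.im = 0
  · rw [if_pos hi]; simp; positivity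
  rw [if_neg hi]
  set z' := z + (if 0 < z.im then t else -t : ℝ) * Complex.I with hz'
  have hs : |z'.im| = |z.im| + t := shift_im z t hi h0
  have hp := abs_pos.2 hi
  have h2 := hC z' (by rw [← abs_pos, hs]; linarith)
  have h3 : z.im ^ 2 ≤ z'.im ^ 2 := by
    rw [sq_le_sq, hs]; linarith
  have h4 := CT_im_le z a
  rw [hz] at h4
  have h5 : z.im ^ 2 * ‖Q z'‖ ≤ C * (2 + r) := by
    calc z.im ^ 2 * ‖Q z'‖ ≤ z'.im ^ 2 * ‖Q z'‖ := by gcongr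
      _ ≤ C * (1 + |z'.im|) := h2
      _ ≤ C * (2 + r) := mul_le_mul_of_nonneg_left (by linarith) hC0
  calc 4 * r ^ 2 * z.im ^ 2 * ‖Q z'‖ = 4 * r ^ 2 * (z.im ^ 2 * ‖Q z'‖) := by ring
    _ ≤ _ := by gcongr

lemma circ_norm (a : ℝ) {r : ℝ} (hr : 0 < r) (θ : ℝ) : ‖circleMap (a : ℂ) r θ - a‖ = r := by
  simp [circleMap, abs_of_pos hr]

lemma GoodQ.TT_circ {Q : ℂ → ℂ} (h : GoodQ Q) (a r t : ℝ) (hr : 0 < r) (ht : 0 ≤ t)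
    (ht1 : t ≤ 1) : CircleIntegrable (TT Q a r t) a r := by
  obtain ⟨B, hB⟩ := h.TT_bound a r hr
  refine (intervalIntegrable_const (c := B)).mono_fun ?_ ?_
  · exact ((h.TT_meas a r t ht).comp (continuous_circleMap _ _).measurable).aestronglyMeasurable
  · refine Eventually.of_forall fun θ => ?_
    exact (hB t ht ht1 _ (circ_norm a hr θ)).trans (le_abs_self B)

lemma GoodQ.TT_identity {Q : ℂ → ℂ} (h : GoodQ Q) {a r t : ℝ} (hr : 0 < r) (ht : 0 < t)
    (ht1 : t ≤ 1) {w : ℂ} (hw : w ∈ Metric.ball (a : ℂ) r) (hwt : t < |w.im|) :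
    ∮ z in C(a, r), (z - w)⁻¹ • TT Q a r t z = 2 * Real.pi * Complex.I * TT Q a r t w +
      ∫ x in (a - r)..(a + r), (x - w)⁻¹ * (ppol a r x *
        (-(2 * Complex.I * (Q (x + t * Complex.I)).im))) := by
  set c := TT Q a r t w with hc
  have hw0 : w.im ≠ 0 := by rw [← abs_pos]; linarith
  set φ : ℂ → ℂ := fun z => ppol a r z * Q (z + t * Complex.I) with hφ
  set ψ : ℂ → ℂ := fun z => ppol a r z * Q (z - t * Complex.I) with hψ
  have hφd : DifferentiableOn ℂ φ {z | -t < z.im} := by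
    intro z hz
    have hz : -t < z.im := hz
    refine DifferentiableAt.differentiableWithinAt ?_
    refine (ppol_diff a r z).mul (DifferentiableAt.comp z (h.hd _ ?_) (by fun_prop))
    simp
    linarith
  have hψd : DifferentiableOn ℂ ψ {z | z.im < t} := by
    intro z hz
    have hz : z.im < t := hz
    refine DifferentiableAt.differentiableWithinAt ?_
    refine (ppol_diff a r z).mul (DifferentiableAt.comp z (h.hd _ ?_) (by fun_prop))
    simp
    linarith
  have hT1 : ∀ z : ℂ, 0 < z.im → TT Q a r t z = φ z := by
    intro z hz
    simp [TT, hφ, hz.ne', hz]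
  have hT2 : ∀ z : ℂ, z.im < 0 → TT Q a r t z = ψ z := by
    intro z hz
    simp [TT, hψ, hz.ne, hz.le.not_gt, sub_eq_add_neg]
  have d1 := qq_diff (isOpen_lt continuous_const Complex.continuous_im) hφd (w := w) (c := c) (by
    intro hwU
    have hwU : -t < w.im := hwU
    refine hT1 w ?_
    rcases lt_abs.1 hwt with h' | h' <;> linarith)
  have d2 := qq_diff (isOpen_lt Complex.continuous_im continuous_const) hψd (w := w) (c := c) (by
    intro hwU
    have hwU : w.im < t := hwU
    refine hT2 w ?_
    rcases lt_abs.1 hwt with h' | h' <;> linarith)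
  have a1 := arc_up (a := a) hr ht d1
  have a2 := arc_down (a := a) hr ht d2
  have hne : ∀ θ, circleMap (a : ℂ) r θ ≠ w := by
    intro θ h0
    rw [mem_ball_iff_norm, ← h0, circ_norm a hr] at hw
    exact lt_irrefl _ hw
  have hcirc : CircleIntegrable (fun z => (z - w)⁻¹ • (TT Q a r t z - c)) a r := by
    refine IntervalIntegrable.continuousOn_mul ((h.TT_circ a r t hr ht.le ht1).sub
      (circleIntegrable_const c (a : ℂ) r)) ?_
    refine Continuous.continuousOn (Continuous.inv₀ (by fun_prop) fun θ => ?_)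
    exact sub_ne_zero.2 (hne θ)
  have hint := hcirc.out
  have split : ∮ z in C(a, r), (z - w)⁻¹ • (TT Q a r t z - c) =
      (-∫ x in (a - r)..(a + r), qq φ w c (x : ℂ)) + ∫ x in (a - r)..(a + r), qq ψ w c (x : ℂ) := by
    rw [circleIntegral, ← intervalIntegral.integral_add_adjacent_intervals (b := Real.pi)
      (hint.mono_set (by
        rw [Set.uIcc_of_le Real.pi_pos.le, Set.uIcc_of_le (by linarith [Real.pi_pos])]
        exact Set.Icc_subset_Icc_right (by linarith [Real.pi_pos])))
      (hint.mono_set (by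
        rw [Set.uIcc_of_le (by linarith [Real.pi_pos]), Set.uIcc_of_le (by linarith [Real.pi_pos])]
        exact Set.Icc_subset_Icc_left (by linarith [Real.pi_pos]))), ← a1, ← a2]
    congr 1
    · refine intervalIntegral.integral_congr_Ioo_of_le Real.pi_pos.le fun θ hθ => ?_
      have : 0 < Real.sin θ := Real.sin_pos_of_mem_Ioo hθ
      simp only [deriv_circleMap, smul_eq_mul]
      rw [hT1 _ (by simp [circleMap, Complex.exp_im]; positivity), qq, if_neg (hne θ)]
    · refine intervalIntegral.integral_congr_Ioo_of_le (by linarith [Real.pi_pos]) fun θ hθ => ?_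
      rw [Set.mem_Ioo] at hθ
      have : 0 < Real.sin (θ - Real.pi) := Real.sin_pos_of_pos_of_lt_pi (by linarith) (by linarith)
      rw [Real.sin_sub_pi] at this
      simp only [deriv_circleMap, smul_eq_mul]
      rw [hT2 _ (by simp [circleMap, Complex.exp_im]; nlinarith), qq, if_neg (hne θ)]
  have hc1 : CircleIntegrable (fun z => (z - w)⁻¹ • TT Q a r t z) a r := by
    refine IntervalIntegrable.continuousOn_mul (h.TT_circ a r t hr ht.le ht1) ?_
    refine Continuous.continuousOn (Continuous.inv₀ (by fun_prop) fun θ => ?_)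
    exact sub_ne_zero.2 (hne θ)
  have hc2 : CircleIntegrable (fun z => (z - w)⁻¹ • c) a r := by
    refine IntervalIntegrable.continuousOn_mul (circleIntegrable_const c (a : ℂ) r) ?_
    refine Continuous.continuousOn (Continuous.inv₀ (by fun_prop) fun θ => ?_)
    exact sub_ne_zero.2 (hne θ)
  have lhs : ∮ z in C(a, r), (z - w)⁻¹ • (TT Q a r t z - c) =
      (∮ z in C(a, r), (z - w)⁻¹ • TT Q a r t z) - 2 * Real.pi * Complex.I * c := by
    simp only [smul_sub]
    rw [circleIntegral.integral_sub hc1 hc2]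
    congr 1
    rw [circleIntegral.integral_smul_const, circleIntegral.integral_sub_inv_of_mem_ball hw,
      smul_eq_mul]
  have hxw : ∀ x : ℝ, (x : ℂ) ≠ w := by
    intro x h0
    apply hw0
    rw [← h0]; simp
  have hI1 : IntervalIntegrable (fun x : ℝ => qq φ w c (x : ℂ)) volume (a - r) (a + r) := by
    refine ContinuousOn.intervalIntegrable (d1.continuousOn.comp (by fun_prop) fun x _ => ?_)
    show -t < (x : ℂ).im
    simpa using ht
  have hI2 : IntervalIntegrable (fun x : ℝ => qq ψ w c (x : ℂ)) volume (a - r) (a + r) := by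
    refine ContinuousOn.intervalIntegrable (d2.continuousOn.comp (by fun_prop) fun x _ => ?_)
    show (x : ℂ).im < t
    simpa using ht
  have rhs : (-∫ x in (a - r)..(a + r), qq φ w c (x : ℂ)) +
      ∫ x in (a - r)..(a + r), qq ψ w c (x : ℂ) =
      ∫ x in (a - r)..(a + r), ((x : ℂ) - w)⁻¹ * (ppol a r x *
        (-(2 * Complex.I * (Q (x + t * Complex.I)).im))) := by
    rw [neg_add_eq_sub, ← intervalIntegral.integral_sub hI2 hI1]
    congr 1
    ext x
    rw [qq, qq, if_neg (hxw x), if_neg (hxw x), hφ, hψ]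
    simp only
    have hcj : Q (x - t * Complex.I) = (starRingEnd ℂ) (Q (x + t * Complex.I)) := by
      rw [← h.hc _ (by simp; exact ht.ne')]
      congr 1
      simp [sub_eq_add_neg]
    have h5 := Complex.sub_conj (Q (x + t * Complex.I))
    rw [hcj]
    have : (2 * Complex.I * ((Q (x + t * Complex.I)).im : ℂ)) =
        Q (x + t * Complex.I) - (starRingEnd ℂ) (Q (x + t * Complex.I)) := by
      rw [h5]; push_cast; ring
    rw [this]
    ring
  rw [← rhs, ← split, lhs]
  ring

lemma GoodQ.extend {Q : ℂ → ℂ} (h : GoodQ Q) {a r : ℝ} (hr : 0 < r)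
    (hL : Tendsto (fun t : ℝ => ∫ x in (a - r)..(a + r), |(Q (x + t * Complex.I)).im|)
      (nhdsWithin 0 (Set.Ioi 0)) (nhds 0)) : AnalyticAt ℂ Q a := by
  obtain ⟨B, hB⟩ := h.TT_bound a r hr
  have hsmall : ∀ᶠ t : ℝ in nhdsWithin 0 (Set.Ioi 0), 0 < t ∧ t ≤ 1 := by
    filter_upwards [self_mem_nhdsWithin, nhdsWithin_le_nhds (Iic_mem_nhds (zero_lt_one (α := ℝ)))]
      with t h1 h2 using ⟨h1, h2⟩
  have hlim : ∀ z : ℂ, Tendsto (fun t => TT Q a r t z) (nhdsWithin 0 (Set.Ioi 0))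
      (nhds (TT Q a r 0 z)) := by
    intro z
    unfold TT
    refine Tendsto.const_mul _ ?_
    by_cases hz : z.im = 0
    · simp [hz]
    · simp only [if_neg hz]
      have hz0 : z + ((if 0 < z.im then 0 else -0 : ℝ) : ℂ) * Complex.I = z := by simp
      rw [hz0]
      refine (h.hd z hz).continuousAt.tendsto.comp ?_
      have : Continuous (fun t : ℝ => z + ((if 0 < z.im then t else -t : ℝ) : ℂ) * Complex.I) := by
        split_ifs <;> fun_prop
      have := this.tendsto 0
      rw [hz0] at this
      exact this.mono_left nhdsWithin_le_nhds
  have key : ∀ w ∈ Metric.ball (a : ℂ) r, w.im ≠ 0 →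
      ∮ z in C(a, r), (z - w)⁻¹ • TT Q a r 0 z = 2 * Real.pi * Complex.I * (ppol a r w * Q w) := by
    intro w hw hw0
    have hwp := abs_pos.2 hw0
    have hne : ∀ θ, circleMap (a : ℂ) r θ ≠ w := by
      intro θ h0
      rw [mem_ball_iff_norm, ← h0, circ_norm a hr] at hw
      exact lt_irrefl _ hw
    have l1 : Tendsto (fun t => ∮ z in C(a, r), (z - w)⁻¹ • TT Q a r t z)
        (nhdsWithin 0 (Set.Ioi 0)) (nhds (∮ z in C(a, r), (z - w)⁻¹ • TT Q a r 0 z)) := by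
      unfold circleIntegral
      refine intervalIntegral.tendsto_integral_filter_of_dominated_convergence
        (fun θ => ‖deriv (circleMap (a : ℂ) r) θ‖ * (‖(circleMap (a : ℂ) r θ - w)⁻¹‖ * B))
        ?_ ?_ ?_ ?_
      · filter_upwards [hsmall] with t ht
        refine Measurable.aestronglyMeasurable ?_
        simp only [deriv_circleMap, smul_eq_mul]
        have m1 := (h.TT_meas a r t ht.1.le).comp (continuous_circleMap (a : ℂ) r).measurable
        have m2 : Measurable (fun θ => circleMap 0 r θ * Complex.I) :=
          Continuous.measurable (by fun_prop)
        have m3 : Measurable (fun θ => (circleMap (a : ℂ) r θ - w)⁻¹) :=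
          ((continuous_circleMap (a : ℂ) r).measurable.sub_const w).inv
        exact m2.mul (m3.mul m1)
      · filter_upwards [hsmall] with t ht
        refine Eventually.of_forall fun θ _ => ?_
        rw [norm_smul, norm_smul]
        gcongr
        exact hB t ht.1.le ht.2 _ (circ_norm a hr θ)
      · refine Continuous.intervalIntegrable ?_ _ _
        simp only [deriv_circleMap]
        refine Continuous.mul (by fun_prop) (Continuous.mul (Continuous.norm
          (Continuous.inv₀ (by fun_prop) fun θ => ?_)) continuous_const)
        exact sub_ne_zero.2 (hne θ)
      · refine Eventually.of_forall fun θ _ => ?_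
        exact ((hlim _).const_smul _).const_smul _
    have l2 : Tendsto (fun t : ℝ => ∫ x in (a - r)..(a + r), ((x : ℂ) - w)⁻¹ * (ppol a r x *
        (-(2 * Complex.I * (Q (x + t * Complex.I)).im)))) (nhdsWithin 0 (Set.Ioi 0)) (nhds 0) := by
      have hL' := hL.const_mul (|w.im|⁻¹ * (r ^ 4 * 2))
      rw [mul_zero] at hL'
      refine squeeze_zero_norm' ?_ hL'
      filter_upwards [hsmall] with t ht
      rw [← intervalIntegral.integral_const_mul]
      have hcont : Continuous (fun x : ℝ => (Q (x + t * Complex.I)).im) := by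
        refine Complex.continuous_im.comp (continuous_iff_continuousAt.2 fun x => ?_)
        refine ContinuousAt.comp (f := fun x : ℝ => (x : ℂ) + t * Complex.I)
          (h.hd _ ?_).continuousAt (by fun_prop)
        simp; exact ht.1.ne'
      refine intervalIntegral.norm_integral_le_of_norm_le (by linarith) ?_
        (Continuous.intervalIntegrable (by fun_prop) _ _)
      refine Eventually.of_forall fun x hx => ?_
      rw [Set.mem_Ioc] at hx
      have e1 : ‖((x : ℂ) - w)⁻¹‖ ≤ |w.im|⁻¹ := by
        rw [norm_inv]
        gcongr
        rw [norm_sub_rev]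
        exact CT_im_le w x
      have e2 : ‖ppol a r x‖ ≤ r ^ 4 := by
        have : ppol a r x = ((((x - a) ^ 2 - r ^ 2) ^ 2 : ℝ) : ℂ) := by
          rw [ppol]; push_cast; ring
        rw [this, Complex.norm_real, Real.norm_eq_abs, abs_of_nonneg (by positivity)]
        have h1 : (x - a) ^ 2 ≤ r ^ 2 := by
          rw [sq_le_sq, abs_of_pos hr, abs_le]
          constructor <;> linarith
        have h2 : 0 ≤ (x - a) ^ 2 := sq_nonneg _
        nlinarith
      rw [norm_mul, norm_mul, norm_neg, norm_mul, norm_mul, Complex.norm_I, Complex.norm_real,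
        Real.norm_eq_abs]
      simp only [Complex.norm_ofNat, mul_one]
      calc ‖((x : ℂ) - w)⁻¹‖ * (‖ppol a r x‖ * (2 * |(Q (x + t * Complex.I)).im|))
          ≤ |w.im|⁻¹ * (r ^ 4 * (2 * |(Q (x + t * Complex.I)).im|)) := by gcongr
        _ = _ := by ring
    have l3 := ((hlim w).const_mul (2 * Real.pi * Complex.I)).add l2
    rw [add_zero] at l3
    have hT0 : TT Q a r 0 w = ppol a r w * Q w := by
      simp [TT, hw0]
    rw [hT0] at l3
    refine tendsto_nhds_unique l1 (l3.congr' ?_)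
    filter_upwards [hsmall, nhdsWithin_le_nhds (Iio_mem_nhds hwp)] with t ht ht2
    exact (h.TT_identity hr ht.1 ht.2 hw ht2).symm
  have han := (hasFPowerSeriesOn_cauchy_integral (R := ⟨r, hr.le⟩)
    (h.TT_circ a r 0 hr le_rfl zero_le_one) hr).analyticAt
  have hpa : ppol a r a ≠ 0 := by
    simp [ppol, hr.ne']
  have han2 := han.div ((ppol_diff a r).analyticAt (a : ℂ)) hpa
  refine h.ext a _ han2 ?_
  have hpn : ∀ᶠ z in nhds (a : ℂ), ppol a r z ≠ 0 :=
    (ppol_diff a r).continuous.continuousAt.eventually_ne hpa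
  filter_upwards [Metric.ball_mem_nhds (a : ℂ) hr, hpn] with z hz hpz hz0
  have := key z hz hz0
  have hpi : (2 * Real.pi * Complex.I : ℂ) ≠ 0 := by
    simp [Real.pi_ne_zero]
  simp only [Pi.div_apply, smul_eq_mul] at this ⊢
  erw [this]
  field_simp

lemma pk_eq {t : ℝ} (ht : 0 < t) (x : ℝ) :
    t / (x ^ 2 + t ^ 2) = t⁻¹ * (1 + (x / t) ^ 2)⁻¹ := by
  have : x ^ 2 + t ^ 2 ≠ 0 := by positivity
  have : t ^ 2 + x ^ 2 ≠ 0 := by positivity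
  rw [div_pow]
  field_simp
  ring

lemma pk_int {t : ℝ} (ht : 0 < t) : Integrable (fun x : ℝ => t / (x ^ 2 + t ^ 2)) := by
  simp only [pk_eq ht]
  exact (integrable_inv_one_add_sq.comp_div ht.ne').const_mul _

lemma pk_integral {t : ℝ} (ht : 0 < t) : ∫ x : ℝ, t / (x ^ 2 + t ^ 2) = Real.pi := by
  simp only [pk_eq ht]
  rw [integral_const_mul, Measure.integral_comp_div (fun x => (1 + x ^ 2)⁻¹) t,
    integral_univ_inv_one_add_sq, abs_of_pos ht, smul_eq_mul, ← mul_assoc,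
    inv_mul_cancel₀ ht.ne', one_mul]

noncomputable def NN (g : ℝ → ℝ) (t x : ℝ) : ℝ := ∫ y, g y * (t / ((x - y) ^ 2 + t ^ 2))

lemma NN_eq {g : ℝ → ℝ} (hg : Integrable g) {t : ℝ} (ht : 0 < t) (x : ℝ) :
    -(CT g (x + t * Complex.I)).im = NN g t x := by
  rw [CT_im_eq hg (by simp; exact ht.ne'), neg_neg, NN]
  simp

lemma NN_integrand {g : ℝ → ℝ} (hg : Integrable g) {t : ℝ} (ht : 0 < t) (x : ℝ) :
    Integrable (fun y => g y * (t / ((x - y) ^ 2 + t ^ 2))) := by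
  refine hg.mul_bdd (c := t⁻¹) ?_ ?_
  · exact Measurable.aestronglyMeasurable (by fun_prop)
  · refine Eventually.of_forall fun y => ?_
    rw [Real.norm_eq_abs, abs_of_nonneg (by positivity), div_le_iff₀ (by positivity)]
    have : t⁻¹ * t = 1 := inv_mul_cancel₀ ht.ne'
    have h2 : 0 ≤ t⁻¹ * (x - y) ^ 2 := by positivity
    nlinarith

lemma NN_add {g h : ℝ → ℝ} (hg : Integrable g) (hh : Integrable h) {t : ℝ} (ht : 0 < t) (x : ℝ) :
    NN (fun y => g y + h y) t x = NN g t x + NN h t x := by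
  rw [NN, NN, NN, ← integral_add (NN_integrand hg ht x) (NN_integrand hh ht x)]
  congr 1
  ext y
  ring

lemma NN_nonneg {g : ℝ → ℝ} (hg : ∀ x, 0 ≤ g x) {t : ℝ} (ht : 0 < t) (x : ℝ) : 0 ≤ NN g t x := by
  refine integral_nonneg fun y => ?_
  have := hg y
  positivity

lemma NN_le {g : ℝ → ℝ} (hg : Integrable g) {A : ℝ} (hA : ∀ x, g x ≤ A) {t : ℝ} (ht : 0 < t)
    (x : ℝ) : NN g t x ≤ A * Real.pi := by
  rw [← pk_integral ht, ← integral_sub_left_eq_self (fun x => t / (x ^ 2 + t ^ 2)) volume x,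
    ← integral_const_mul]
  refine integral_mono (NN_integrand hg ht x) (((pk_int ht).comp_sub_left x).const_mul A) ?_
  intro y
  have : 0 ≤ t / ((x - y) ^ 2 + t ^ 2) := by positivity
  exact mul_le_mul_of_nonneg_right (hA y) this

lemma NN_conv {g : ℝ → ℝ} {t : ℝ} : NN g t =
    convolution g (fun x => t / (x ^ 2 + t ^ 2)) (ContinuousLinearMap.mul ℝ ℝ) volume := by
  ext x
  rw [convolution_def]
  rfl

lemma NN_int {g : ℝ → ℝ} (hg : Integrable g) {t : ℝ} (ht : 0 < t) : Integrable (NN g t) := by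
  rw [NN_conv]
  exact hg.integrable_convolution _ (pk_int ht)

lemma NN_integral {g : ℝ → ℝ} (hg : Integrable g) {t : ℝ} (ht : 0 < t) :
    ∫ x, NN g t x = (∫ x, g x) * Real.pi := by
  rw [NN_conv, integral_convolution _ hg (pk_int ht), pk_integral ht]
  rfl

lemma tail_int {g : ℝ → ℝ} (hg : Integrable g) (hg0 : ∀ x, 0 ≤ g x) {A : ℝ} (hA : 0 ≤ A) :
    Integrable (fun x => max (g x - A) 0) := by
  refine hg.mono ?_ (Eventually.of_forall fun x => ?_)
  · have := (hg.aestronglyMeasurable.sub (aestronglyMeasurable_const (b := A))).sup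
      (aestronglyMeasurable_const (b := (0:ℝ)))
    exact this
  · have := hg0 x
    rw [Real.norm_eq_abs, Real.norm_eq_abs, abs_of_nonneg this, abs_of_nonneg (le_max_right _ _)]
    exact max_le (by linarith) this

lemma tail_lim {g : ℝ → ℝ} (hg : Integrable g) (hg0 : ∀ x, 0 ≤ g x) :
    Tendsto (fun n : ℕ => ∫ x, max (g x - n) 0) atTop (nhds 0) := by
  have := tendsto_integral_of_dominated_convergence (F := fun (n : ℕ) x => max (g x - n) 0)
    (f := fun _ => (0:ℝ)) (μ := volume) g
    (fun n => (tail_int hg hg0 (Nat.cast_nonneg n)).aestronglyMeasurable) hg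
    (fun n => Eventually.of_forall fun x => by
      have := hg0 x
      have hn : (0:ℝ) ≤ n := Nat.cast_nonneg n
      rw [Real.norm_eq_abs, abs_of_nonneg (le_max_right _ _)]
      exact max_le (by linarith) this)
    (Eventually.of_forall fun x => by
      refine tendsto_const_nhds.congr' ?_
      filter_upwards [tendsto_natCast_atTop_atTop.eventually_ge_atTop (g x)] with n hn
      rw [max_eq_right (by linarith)])
  simpa using this

lemma L1lim {u : ℝ → ℝ → ℝ} {g : ℝ → ℝ} (hg : Integrable g) (hg0 : ∀ x, 0 ≤ g x) {l r C0 : ℝ}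
    (hlr : l ≤ r) (hC0 : 0 ≤ C0) (hcont : ∀ t, 0 < t → Continuous (u t))
    (hb : ∀ t, 0 < t → t < 1 → ∀ x, l ≤ x → x ≤ r → |u t x| ≤ NN g t x + C0)
    (hae : ∀ᵐ x, Tendsto (fun t => u t x) (nhdsWithin 0 (Set.Ioi 0)) (nhds 0)) :
    Tendsto (fun t => ∫ x in l..r, |u t x|) (nhdsWithin 0 (Set.Ioi 0)) (nhds 0) := by
  have hsmall : ∀ᶠ t : ℝ in nhdsWithin 0 (Set.Ioi 0), 0 < t ∧ t < 1 := by
    filter_upwards [self_mem_nhdsWithin, nhdsWithin_le_nhds (Iio_mem_nhds (zero_lt_one (α := ℝ)))]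
      with t h1 h2 using ⟨h1, h2⟩
  rw [Metric.tendsto_nhds]
  intro ε hε
  have hpi := Real.pi_pos
  obtain ⟨n, hn⟩ := ((tail_lim hg hg0).eventually_lt_const
    (show (0:ℝ) < ε / 2 / Real.pi by positivity)).exists
  have hn0 : (0:ℝ) ≤ n := Nat.cast_nonneg n
  set K := C0 + n * Real.pi with hK
  have hK0 : 0 ≤ K := by positivity
  set G : ℝ → ℝ := fun x => max (g x - n) 0 with hG
  have hGi : Integrable G := tail_int hg hg0 hn0
  have hG0 : ∀ x, 0 ≤ G x := fun x => le_max_right _ _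
  have l1 : Tendsto (fun t => ∫ x in l..r, min |u t x| K) (nhdsWithin 0 (Set.Ioi 0))
      (nhds (∫ x in l..r, (0:ℝ))) := by
    refine intervalIntegral.tendsto_integral_filter_of_dominated_convergence (fun _ => K)
      ?_ ?_ intervalIntegrable_const ?_
    · filter_upwards [hsmall] with t ht
      have := hcont t ht.1
      exact Continuous.aestronglyMeasurable (by fun_prop)
    · filter_upwards [hsmall] with t ht
      refine Eventually.of_forall fun x _ => ?_
      rw [Real.norm_eq_abs, abs_of_nonneg (le_min (abs_nonneg _) hK0)]
      exact min_le_right _ _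
    · filter_upwards [hae] with x hx _
      have := hx.abs.min (tendsto_const_nhds (x := K))
      rw [abs_zero, min_eq_left hK0] at this
      exact this
  rw [intervalIntegral.integral_zero] at l1
  filter_upwards [hsmall, l1.eventually_lt_const (half_pos hε)] with t ht hlt
  have hu := hcont t ht.1
  have hnn : 0 ≤ ∫ x in l..r, |u t x| := intervalIntegral.integral_nonneg hlr fun x _ => abs_nonneg _
  rw [dist_zero_right, Real.norm_eq_abs, abs_of_nonneg hnn]
  have hle : ∫ x in l..r, |u t x| ≤ ∫ x in l..r, (min |u t x| K + NN G t x) := by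
    refine intervalIntegral.integral_mono_on hlr (Continuous.intervalIntegrable (by fun_prop) _ _)
      ((Continuous.intervalIntegrable (by fun_prop) _ _).add (NN_int hGi ht.1).intervalIntegrable) ?_
    intro x hx
    rw [Set.mem_Icc] at hx
    have h1 := hb t ht.1 ht.2 x hx.1 hx.2
    have hgG : Integrable (fun y => g y - G y) := hg.sub hGi
    have e : NN g t x = NN (fun y => g y - G y) t x + NN G t x := by
      rw [← NN_add hgG hGi ht.1]
      simp
    have h2 : NN (fun y => g y - G y) t x ≤ n * Real.pi := by
      refine NN_le hgG (fun y => ?_) ht.1 x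
      have := le_max_left (g y - n) 0
      show g y - max (g y - n) 0 ≤ n
      linarith
    have h3 := NN_nonneg hG0 ht.1 x
    rcases le_total |u t x| K with h4 | h4
    · rw [min_eq_left h4]; linarith
    · rw [min_eq_right h4]; linarith
  rw [intervalIntegral.integral_add (Continuous.intervalIntegrable (by fun_prop) _ _)
    (NN_int hGi ht.1).intervalIntegrable] at hle
  have h5 : ∫ x in l..r, NN G t x ≤ ∫ x, NN G t x := by
    rw [intervalIntegral.integral_of_le hlr]
    exact setIntegral_le_integral (NN_int hGi ht.1)
      (Eventually.of_forall fun x => NN_nonneg hG0 ht.1 x)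
  rw [NN_integral hGi ht.1] at h5
  have h6 : (∫ x, G x) * Real.pi < ε / 2 := by
    rwa [lt_div_iff₀ hpi] at hn
  linarith

lemma CT_im_nonpos {g : ℝ → ℝ} (hg : Integrable g) (hg0 : ∀ x, 0 ≤ g x) (w : ℂ) (hw : 0 < w.im) :
    (CT g w).im ≤ 0 := by
  rw [CT_im_eq hg hw.ne']
  have : 0 ≤ ∫ y, g y * (w.im / ((w.re - y) ^ 2 + w.im ^ 2)) := by
    refine integral_nonneg fun y => ?_
    have := hg0 y
    positivity
  linarith

lemma GoodQ.seg {Q : ℂ → ℂ} (h : GoodQ Q) {s : ℝ} (hs : AnalyticAt ℂ Q s) :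
    ∃ K : ℝ, 0 ≤ K ∧ ∀ t : ℝ, 0 < t → t ≤ 1 → |(Q (s + t * Complex.I)).im| ≤ K := by
  have hc : ContinuousOn (fun t : ℝ => (Q (s + t * Complex.I)).im) (Set.Icc 0 1) := by
    intro t ht
    refine ContinuousAt.continuousWithinAt ?_
    have h1 : ContinuousAt Q (s + t * Complex.I) := by
      refine (h.diff fun h0 => ?_).continuousAt
      simpa using hs
    have h2 : ContinuousAt (fun t : ℝ => Q (s + t * Complex.I)) t :=
      ContinuousAt.comp (f := fun t : ℝ => (s : ℂ) + t * Complex.I) h1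
        (Continuous.continuousAt (by fun_prop))
    exact Complex.continuous_im.continuousAt.comp h2
  obtain ⟨K, hK⟩ := isCompact_Icc.exists_bound_of_continuousOn hc
  refine ⟨|K|, abs_nonneg _, fun t h1 h2 => ?_⟩
  exact (hK t ⟨h1.le, h2⟩).trans (le_abs_self _)

lemma GoodQ.isClosed_sing (Q : ℂ → ℂ) : IsClosed {x : ℝ | ¬ AnalyticAt ℂ Q x} := by
  have : IsOpen {x : ℝ | AnalyticAt ℂ Q x} :=
    (isOpen_analyticAt ℂ Q).preimage Complex.continuous_ofReal
  exact this.isClosed_compl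

lemma GoodQ.local {Q : ℂ → ℂ} (h : GoodQ Q) {a δ C0 : ℝ} (hδ : 0 < δ) {g : ℝ → ℝ}
    (hg : Integrable g) (hg0 : ∀ x, 0 ≤ g x) (hC0 : 0 ≤ C0)
    (hS : ∀ s : ℝ, |s - a| ≤ δ → ¬ AnalyticAt ℂ Q s → ∀ t : ℝ, 0 < t → t ≤ 1 →
      |(Q (s + t * Complex.I)).im| ≤ NN g t s + C0)
    (hae : ∀ᵐ x : ℝ, Tendsto (fun t : ℝ => (Q (x + t * Complex.I)).im)
      (nhdsWithin 0 (Set.Ioi 0)) (nhds 0)) : AnalyticAt ℂ Q a := by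
  obtain ⟨C, hC1, hC2⟩ := h.hC
  have hends : ∀ s : ℝ, |s - a| ≤ δ → ∃ K : ℝ, 0 ≤ K ∧ ∀ t : ℝ, 0 < t → t ≤ 1 →
      |(Q (s + t * Complex.I)).im| ≤ NN g t s + K := by
    intro s hs
    by_cases hr : AnalyticAt ℂ Q s
    · obtain ⟨K, hK, hK2⟩ := h.seg hr
      refine ⟨K, hK, fun t h1 h2 => ?_⟩
      have := hK2 t h1 h2
      have := NN_nonneg hg0 h1 s
      linarith
    · exact ⟨C0, hC0, hS s hs hr⟩
  obtain ⟨K1, hK1, hK1'⟩ := hends (a - δ) (by rw [sub_sub_cancel_left, abs_neg, abs_of_pos hδ])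
  obtain ⟨K2, hK2, hK2'⟩ := hends (a + δ) (by rw [add_sub_cancel_left, abs_of_pos hδ])
  set D := C0 + K1 + K2 + 2 * C with hD
  have hD0 : 0 ≤ D := by positivity
  set T : Set ℝ := {x | ¬ AnalyticAt ℂ Q x} ∪ {a - δ, a + δ} with hT
  have hTc : IsClosed T := (GoodQ.isClosed_sing Q).union (Set.toFinite _).isClosed
  have hTb : ∀ s ∈ T, |s - a| ≤ δ → ∀ t : ℝ, 0 < t → t ≤ 1 →
      |(Q (s + t * Complex.I)).im| ≤ NN g t s + D := by
    intro s hs hsa t h1 h2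
    rcases hs with hs | hs | hs
    · have := hS s hsa hs t h1 h2
      linarith
    · have := hK1' t h1 h2
      rw [hs]
      linarith
    · have := hK2' t h1 h2
      rw [Set.mem_singleton_iff.1 hs]
      linarith
  have hbound : ∀ t : ℝ, 0 < t → t < 1 → ∀ x : ℝ, a - δ ≤ x → x ≤ a + δ →
      |(Q (x + t * Complex.I)).im| ≤ NN g t x + D := by
    intro t ht0 ht1 x hx1 hx2
    by_cases hxT : x ∈ T
    · exact hTb x hxT (by rw [abs_le]; constructor <;> linarith) t ht0 ht1.le
    obtain ⟨α, hα1, hα2⟩ := ((isCompact_Icc (a := a - δ) (b := x)).inter_left hTc).exists_isGreatest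
      ⟨a - δ, Or.inr (Or.inl rfl), le_rfl, hx1⟩
    obtain ⟨β, hβ1, hβ2⟩ := ((isCompact_Icc (a := x) (b := a + δ)).inter_left hTc).exists_isLeast
      ⟨a + δ, Or.inr (Or.inr rfl), hx2, le_rfl⟩
    have hα3 := hα1.2.1
    have hα4 := hα1.2.2
    have hβ3 := hβ1.2.1
    have hβ4 := hβ1.2.2
    have hαx : α < x := lt_of_le_of_ne hα4 (fun e => hxT (e ▸ hα1.1))
    have hβx : x < β := lt_of_le_of_ne hβ3 (fun e => hxT (e ▸ hβ1.1))
    rw [← NN_eq hg ht0]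
    refine h.PL hg (CT_im_nonpos hg hg0) hD0 (α := α) (β := β) ?_ ?_ ?_ ?_ hαx hβx ht0 ht1
    · intro y hy1 hy2
      by_contra hy
      have hyT : y ∈ T := Or.inl hy
      rcases le_total y x with h5 | h5
      · have := hα2 ⟨hyT, by linarith, h5⟩
        linarith
      · have := hβ2 ⟨hyT, h5, by linarith⟩
        linarith
    · intro t h1 h2
      rw [NN_eq hg h1]
      exact hTb α hα1.1 (by rw [abs_le]; constructor <;> linarith) t h1 h2
    · intro t h1 h2
      rw [NN_eq hg h1]
      exact hTb β hβ1.1 (by rw [abs_le]; constructor <;> linarith) t h1 h2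
    · intro x _ _
      have h5 := hC2 (x + Complex.I) (by simp)
      simp only [Complex.add_im, Complex.ofReal_im, Complex.I_im, zero_add, one_pow, one_mul,
        abs_one] at h5
      have := Complex.abs_im_le_norm (Q (x + Complex.I))
      linarith
  refine h.extend hδ (L1lim (u := fun t x => (Q (x + t * Complex.I)).im) hg hg0 (by linarith) hD0
    ?_ hbound hae)
  intro t ht
  refine Complex.continuous_im.comp ?_
  rw [continuous_iff_continuousAt]
  intro x
  have h1 : ContinuousAt Q (x + t * Complex.I) := (h.hd _ (by simpa using ht.ne')).continuousAt
  exact ContinuousAt.comp (f := fun x : ℝ => (x : ℂ) + t * Complex.I) h1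
    (Continuous.continuousAt (by fun_prop))

lemma baire_loc {S U : Set ℝ} (hS : IsClosed S) (hU : IsOpen U) {s0 : ℝ} (h1 : s0 ∈ S)
    (h2 : s0 ∈ U) {E : ℕ → Set ℝ} (hE : ∀ n, IsClosed (E n)) (hcov : ∀ x, ∃ n, x ∈ E n) :
    ∃ a ∈ S, ∃ δ : ℝ, ∃ n, 0 < δ ∧ (∀ s, |s - a| ≤ δ → s ∈ U) ∧
      ∀ s, |s - a| ≤ δ → s ∈ S → s ∈ E n := by
  have := hS.completeSpace_coe
  have hd : Dense (⋃ n, interior ((Subtype.val : S → ℝ) ⁻¹' (E n))) := by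
    refine dense_iUnion_interior_of_closed (fun n => (hE n).preimage continuous_subtype_val) ?_
    ext x
    simp [hcov]
  obtain ⟨a, ha1, ha2⟩ := hd.inter_open_nonempty _ (hU.preimage (continuous_subtype_val (p := (· ∈ S))))
    ⟨⟨s0, h1⟩, h2⟩
  obtain ⟨n, hn⟩ := Set.mem_iUnion.1 ha2
  rw [mem_interior_iff_mem_nhds, Metric.mem_nhds_iff] at hn
  obtain ⟨d, hd0, hd1⟩ := hn
  obtain ⟨e, he0, he1⟩ := Metric.isOpen_iff.1 hU a.1 ha1
  refine ⟨a.1, a.2, min d e / 2, n, by positivity, fun s hs => he1 ?_, fun s hs hsS => ?_⟩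
  · rw [Metric.mem_ball, Real.dist_eq]
    have := min_le_right d e
    have : 0 < min d e := by positivity
    linarith
  · refine hd1 (a := ⟨s, hsS⟩) ?_
    rw [Metric.mem_ball, Subtype.dist_eq, Real.dist_eq]
    have := min_le_left d e
    have : 0 < min d e := by positivity
    show |s - a.1| < d
    linarith

noncomputable def Q0 (f0 f1 f2 : ℝ → ℝ) (z : ℂ) : ℂ := CT f0 z * CT f1 z - 2 * CT f2 z

noncomputable def QQ (f0 f1 f2 : ℝ → ℝ) (z : ℂ) : ℂ :=
  if z.im = 0 then limUnder (nhdsWithin (0:ℝ) (Set.Ioi 0)) (fun t : ℝ => Q0 f0 f1 f2 (z + t * Complex.I))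
  else Q0 f0 f1 f2 z

lemma QQ_of {f0 f1 f2 : ℝ → ℝ} {z : ℂ} (hz : z.im ≠ 0) : QQ f0 f1 f2 z = Q0 f0 f1 f2 z := by
  rw [QQ, if_neg hz]

lemma Q0_diff {f0 f1 f2 : ℝ → ℝ} (h0 : Integrable f0) (h1 : Integrable f1) (h2 : Integrable f2)
    {z : ℂ} (hz : z.im ≠ 0) : DifferentiableAt ℂ (Q0 f0 f1 f2) z := by
  have a := CT_hasDerivAt h0 hz
  have b := CT_hasDerivAt h1 hz
  have c := CT_hasDerivAt h2 hz
  unfold Q0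
  fun_prop

lemma Q0_bd {f0 f1 f2 : ℝ → ℝ} (z : ℂ) :
    z.im ^ 2 * ‖Q0 f0 f1 f2 z‖ ≤ (|z.im| * ‖CT f0 z‖) * (|z.im| * ‖CT f1 z‖)
      + 2 * |z.im| * (|z.im| * ‖CT f2 z‖) := by
  have : ‖Q0 f0 f1 f2 z‖ ≤ ‖CT f0 z‖ * ‖CT f1 z‖ + 2 * ‖CT f2 z‖ := by
    refine (norm_sub_le _ _).trans ?_
    simp
  have h2 : z.im ^ 2 = |z.im| * |z.im| := by rw [← sq_abs, sq]
  rw [h2]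
  calc |z.im| * |z.im| * ‖Q0 f0 f1 f2 z‖
      ≤ |z.im| * |z.im| * (‖CT f0 z‖ * ‖CT f1 z‖ + 2 * ‖CT f2 z‖) := by gcongr
    _ = _ := by ring

lemma CT_mul_le {f : ℝ → ℝ} (hf : Integrable f) {z : ℂ} (hz : z.im ≠ 0) :
    |z.im| * ‖CT f z‖ ≤ ∫ y, |f y| := by
  have := CT_norm_le hf hz
  have h0 : 0 < |z.im| := abs_pos.2 hz
  rw [le_div_iff₀ h0] at this
  linarith

lemma QQ_good {f0 f1 f2 : ℝ → ℝ} (h0 : Integrable f0) (h1 : Integrable f1) (h2 : Integrable f2) :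
    GoodQ (QQ f0 f1 f2) := by
  have p0 : 0 ≤ ∫ y, |f0 y| := integral_nonneg fun y => abs_nonneg _
  have p1 : 0 ≤ ∫ y, |f1 y| := integral_nonneg fun y => abs_nonneg _
  have p2 : 0 ≤ ∫ y, |f2 y| := integral_nonneg fun y => abs_nonneg _
  refine ⟨?_, ?_, ?_, ?_, ?_⟩
  · intro z hz
    refine (Q0_diff h0 h1 h2 hz).congr_of_eventuallyEq ?_
    have : ∀ᶠ w : ℂ in nhds z, w.im ≠ 0 :=
      Complex.continuous_im.continuousAt.eventually_ne hz
    filter_upwards [this] with w hw using QQ_of hw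
  · intro z hz
    rw [QQ_of hz, QQ_of (by simpa using hz), Q0, Q0, CT_conj, CT_conj, CT_conj, map_sub, map_mul,
      map_mul, map_ofNat]
  · refine ⟨(∫ y, |f0 y|) * (∫ y, |f1 y|) + 2 * ∫ y, |f2 y|, by positivity, fun z hz => ?_⟩
    rw [QQ_of hz]
    have a := CT_mul_le h0 hz
    have b := CT_mul_le h1 hz
    have c := CT_mul_le h2 hz
    calc _ ≤ _ := Q0_bd z
      _ ≤ (∫ y, |f0 y|) * (∫ y, |f1 y|) + 2 * |z.im| * ∫ y, |f2 y| := by gcongr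
      _ ≤ _ := by
        have : 0 ≤ (∫ y, |f0 y|) * (∫ y, |f1 y|) := by positivity
        nlinarith [abs_nonneg z.im, mul_nonneg this (abs_nonneg z.im)]
  · intro ε hε
    obtain ⟨t1, ht1, hs1⟩ := CT_small h0 (ε := ε / 2 / (1 + ∫ y, |f1 y|)) (by positivity)
    refine ⟨min t1 (ε / 4 / (1 + ∫ y, |f2 y|)), lt_min ht1 (by positivity), fun z hz hzt => ?_⟩
    rw [QQ_of hz]
    have a := hs1 z hz (hzt.trans_le (min_le_left _ _))
    have b := CT_mul_le h1 hz
    have c := CT_mul_le h2 hz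
    have d := (hzt.trans_le (min_le_right _ _)).le
    calc _ ≤ _ := Q0_bd z
      _ ≤ (ε / 2 / (1 + ∫ y, |f1 y|)) * (1 + ∫ y, |f1 y|) +
          2 * (ε / 4 / (1 + ∫ y, |f2 y|)) * (1 + ∫ y, |f2 y|) := by
        gcongr
        · linarith
        · linarith
      _ = ε := by
        field_simp
        ring
  · intro x E hE hev
    refine hE.congr ?_
    have hE2 := hE.eventually_analyticAt
    filter_upwards [hev.eventually_nhds, hE2] with w hw hEw
    by_cases hwi : w.im = 0
    · rw [QQ, if_pos hwi]
      symm
      apply Tendsto.limUnder_eq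
      have t1 : Tendsto (fun t : ℝ => w + t * Complex.I) (nhdsWithin 0 (Set.Ioi 0)) (nhds w) := by
        have : Continuous (fun t : ℝ => w + t * Complex.I) := by fun_prop
        have := this.tendsto 0
        simp only [Complex.ofReal_zero, zero_mul, add_zero] at this
        exact this.mono_left nhdsWithin_le_nhds
      refine (hEw.continuousAt.tendsto.comp t1).congr' ?_
      filter_upwards [t1.eventually hw, self_mem_nhdsWithin] with t ht ht0
      have h5 : (w + t * Complex.I).im ≠ 0 := by
        have : (0:ℝ) < t := ht0
        simp [hwi, this.ne']
      rw [Function.comp_apply, ← ht h5, QQ_of h5]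
    · exact (hw.self_of_nhds hwi).symm

lemma CT_rel {ρ : ℝ → ℝ} (heven : ∀ x, ρ (-x) = ρ x) (hint : Integrable ρ)
    (h2 : Integrable (fun x => ρ x / x)) {z : ℂ} (hz : z.im ≠ 0) :
    z * CT (fun x => ρ x / x) z = CT ρ z := by
  have e0 : ∫ y, ρ y / y = 0 := by
    have := integral_neg_eq_self (fun y => ρ y / y) volume
    simp only [heven, div_neg] at this
    rw [integral_neg] at this
    linarith
  have e1 : ∫ y, ((ρ y / y : ℝ) : ℂ) = 0 := by
    rw [integral_complex_ofReal, e0]; simp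
  have h2' : Integrable (fun y : ℝ => ((ρ y / y : ℝ) : ℂ)) := h2.ofReal
  rw [CT, CT, ← integral_const_mul, ← zero_add (∫ y, (ρ y : ℂ) / (z - y)), ← e1,
    ← integral_add h2' (CT_integrable hint hz)]
  refine integral_congr_ae ?_
  have : ∀ᵐ y : ℝ, y ≠ 0 := by
    rw [ae_iff]; simp
  filter_upwards [this] with y hy
  have h3 := CT_sub_ne hz y
  have h4 : (y : ℂ) ≠ 0 := by exact_mod_cast hy
  push_cast
  field_simp
  ring

lemma Im_sq_div {u v s t M A κ : ℝ} (hκ : 0 < κ) (hs : κ ≤ |s|) (ht0 : 0 < t) (ht1 : t ≤ 1)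
    (hu : |u| ≤ M) (hA : t * |v| ≤ A) :
    |(((⟨u, v⟩ : ℂ) ^ 2) / (⟨s, t⟩ : ℂ)).im| ≤ (2 * M / κ + A / κ ^ 2) * |v| + M ^ 2 / κ ^ 2 := by
  have hM : 0 ≤ M := (abs_nonneg u).trans hu
  have hs0 : 0 < |s| := hκ.trans_le hs
  have hs2 : κ ^ 2 ≤ s ^ 2 := by rw [← sq_abs s]; gcongr
  have hA0 : 0 ≤ A := le_trans (by positivity) hA
  have hden : 0 < s ^ 2 + t ^ 2 := by positivity
  have e : (((⟨u, v⟩ : ℂ) ^ 2) / (⟨s, t⟩ : ℂ)).im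
      = (2 * u * v * s - t * (u ^ 2 - v ^ 2)) / (s ^ 2 + t ^ 2) := by
    rw [Complex.div_im, Complex.normSq_apply, sq]
    simp only [Complex.mul_im, Complex.mul_re]
    field_simp
    ring
  rw [e, abs_div, abs_of_pos hden, div_le_iff₀ hden]
  have hu2 : u ^ 2 ≤ M ^ 2 := by rw [← sq_abs u]; gcongr
  have i1 : |2 * u * v * s - t * (u ^ 2 - v ^ 2)| ≤ 2 * M * |v| * |s| + M ^ 2 + A * |v| := by
    have a1 : |2 * u * v * s| ≤ 2 * M * |v| * |s| := by
      rw [abs_mul, abs_mul, abs_mul, abs_two]; gcongr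
    have a2 : |t * (u ^ 2 - v ^ 2)| ≤ M ^ 2 + A * |v| := by
      have b1 : t * u ^ 2 ≤ M ^ 2 := by nlinarith [sq_nonneg u]
      have b2 : t * v ^ 2 ≤ A * |v| := by
        rw [← sq_abs v]; nlinarith [abs_nonneg v]
      have b3 : 0 ≤ t * u ^ 2 := by positivity
      have b4 : 0 ≤ t * v ^ 2 := by positivity
      rw [abs_le]; constructor <;> nlinarith
    have := abs_sub (2 * u * v * s) (t * (u ^ 2 - v ^ 2))
    linarith
  refine i1.trans ?_
  have j1 : 2 * M * |v| * |s| ≤ 2 * M / κ * |v| * s ^ 2 := by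
    have : |s| ≤ s ^ 2 / κ := by
      rw [le_div_iff₀ hκ, ← sq_abs s]; nlinarith
    calc 2 * M * |v| * |s| ≤ 2 * M * |v| * (s ^ 2 / κ) := by gcongr
      _ = _ := by ring
  have j2 : ∀ X : ℝ, 0 ≤ X → X ≤ X / κ ^ 2 * s ^ 2 := by
    intro X hX
    rw [div_mul_eq_mul_div, le_div_iff₀ (by positivity)]
    gcongr
  have j3 := j2 (M ^ 2) (by positivity)
  have j4 := j2 (A * |v|) (by positivity)
  have j5 : 0 ≤ ((2 * M / κ + A / κ ^ 2) * |v| + M ^ 2 / κ ^ 2) * t ^ 2 := by positivity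
  have j6 : A * |v| / κ ^ 2 = A / κ ^ 2 * |v| := by ring
  rw [j6] at j4
  nlinarith

lemma NN_const {g : ℝ → ℝ} (c t x : ℝ) : NN (fun y => c * g y) t x = c * NN g t x := by
  rw [NN, NN, ← integral_const_mul]
  congr 1
  ext y
  ring

lemma NN_abs {f : ℝ → ℝ} (hf : Integrable f) {t : ℝ} (ht : 0 < t) (x : ℝ) :
    |(CT f (x + t * Complex.I)).im| ≤ NN (fun y => |f y|) t x := by
  rw [← abs_neg, NN_eq hf ht, NN, NN]
  refine (abs_integral_le_integral_abs).trans (le_of_eq ?_)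
  congr 1
  ext y
  rw [abs_mul, abs_of_nonneg (a := t / ((x - y) ^ 2 + t ^ 2)) (by positivity)]

lemma Q0_rel {ρ f2 : ℝ → ℝ} (heven : ∀ x, ρ (-x) = ρ x) (hint : Integrable ρ)
    (h2 : Integrable (fun x => ρ x / x)) {z : ℂ} (hz : z.im ≠ 0) :
    Q0 ρ (fun x => ρ x / x) f2 z = CT ρ z ^ 2 / z - 2 * CT f2 z := by
  have hz0 : z ≠ 0 := by
    rintro rfl; simp at hz
  rw [Q0, ← CT_rel heven hint h2 hz]
  field_simp

lemma Q_ae {ρ H : ℝ → ℝ} (heven : ∀ x, ρ (-x) = ρ x) (hint : Integrable ρ)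
    (hH : ∀ x : ℝ, Tendsto (fun ε : ℝ => ∫ y in {y : ℝ | ε ≤ |x - y|}, ρ y / (x - y))
        (nhdsWithin 0 (Set.Ioi 0)) (nhds (H x)))
    (h1 : Integrable (fun x => H x * ρ x / x))
    (h2 : Integrable (fun x => ρ x / x)) :
    ∀ᵐ x : ℝ, Tendsto (fun t : ℝ => (QQ ρ (fun x => ρ x / x) (fun x => H x * ρ x / x)
      (x + t * Complex.I)).im) (nhdsWithin 0 (Set.Ioi 0)) (nhds 0) := by
  have h0 : ∀ᵐ y : ℝ, y ≠ 0 := by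
    rw [ae_iff]; simp
  filter_upwards [h0, CT_im_tendsto hint, CT_im_tendsto h1] with x hx0 hx1 hx2
  have hr := CT_re_tendsto hint x (H x) (hH x)
  have hx0' : (x : ℂ) ≠ 0 := by exact_mod_cast hx0
  have hF : Tendsto (fun t : ℝ => CT ρ (x + t * Complex.I)) (nhdsWithin 0 (Set.Ioi 0))
      (nhds ((H x : ℂ) + ((-(Real.pi * ρ x) : ℝ) : ℂ) * Complex.I)) := by
    have a := (Complex.continuous_ofReal.tendsto _).comp hr
    have b := (Complex.continuous_ofReal.tendsto _).comp hx1
    refine (a.add (b.mul_const Complex.I)).congr fun t => ?_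
    simp [Complex.re_add_im]
  have t1 : Tendsto (fun t : ℝ => (x : ℂ) + t * Complex.I) (nhdsWithin 0 (Set.Ioi 0))
      (nhds (x : ℂ)) := by
    have : Continuous (fun t : ℝ => (x : ℂ) + t * Complex.I) := by fun_prop
    have := this.tendsto 0
    simp only [Complex.ofReal_zero, zero_mul, add_zero] at this
    exact this.mono_left nhdsWithin_le_nhds
  have hlim := ((Complex.continuous_im.tendsto _).comp ((hF.pow 2).div t1 hx0')).sub
    (hx2.const_mul 2)
  have hv : ((((H x : ℂ) + ((-(Real.pi * ρ x) : ℝ) : ℂ) * Complex.I) ^ 2) / (x : ℂ)).im -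
      2 * -(Real.pi * (H x * ρ x / x)) = 0 := by
    rw [Complex.div_ofReal_im, sq]
    simp
    field_simp
    ring
  rw [hv] at hlim
  refine hlim.congr' ?_
  filter_upwards [self_mem_nhdsWithin] with t ht
  have ht0 : (0:ℝ) < t := ht
  have hz : ((x : ℂ) + t * Complex.I).im ≠ 0 := by simpa using ht0.ne'
  rw [QQ_of hz, Q0_rel heven hint h2 hz]
  simp

lemma E_closed {ρ : ℝ → ℝ} (hint : Integrable ρ) (M : ℝ) :
    IsClosed {x : ℝ | ∀ t : ℝ, 0 < t → t ≤ 1 → |(CT ρ (x + t * Complex.I)).re| ≤ M} := by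
  simp only [Set.ofPred_forall]
  refine isClosed_iInter fun t => isClosed_iInter fun ht => isClosed_iInter fun _ => ?_
  refine isClosed_le ?_ continuous_const
  refine (Complex.continuous_re.comp ?_).abs
  rw [continuous_iff_continuousAt]
  intro x
  have h1 : ContinuousAt (CT ρ) (x + t * Complex.I) :=
    (CT_hasDerivAt hint (by simpa using ht.ne')).continuousAt
  exact ContinuousAt.comp (f := fun x : ℝ => (x : ℂ) + t * Complex.I) h1
    (Continuous.continuousAt (by fun_prop))

lemma Q_reg {ρ H : ℝ → ℝ} (hρ : ∀ x, 0 ≤ ρ x) (heven : ∀ x, ρ (-x) = ρ x) (hint : Integrable ρ)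
    (hH : ∀ x : ℝ, Tendsto (fun ε : ℝ => ∫ y in {y : ℝ | ε ≤ |x - y|}, ρ y / (x - y))
        (nhdsWithin 0 (Set.Ioi 0)) (nhds (H x)))
    (h1 : Integrable (fun x => H x * ρ x / x))
    (h2 : Integrable (fun x => ρ x / x)) {s0 : ℝ} (hs0 : s0 ≠ 0) :
    AnalyticAt ℂ (QQ ρ (fun x => ρ x / x) (fun x => H x * ρ x / x)) s0 := by
  set Q := QQ ρ (fun x => ρ x / x) (fun x => H x * ρ x / x) with hQ
  have good : GoodQ Q := QQ_good hint h2 h1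
  by_contra hcon
  have hcov : ∀ x : ℝ, ∃ n : ℕ, x ∈ {x : ℝ | ∀ t : ℝ, 0 < t → t ≤ 1 →
      |(CT ρ (x + t * Complex.I)).re| ≤ (n : ℝ)} := by
    intro x
    obtain ⟨M, hM⟩ := bdd_of_tendsto (Φ := fun t : ℝ => (CT ρ (x + t * Complex.I)).re)
      (C := ∫ y, |ρ y|) (integral_nonneg fun y => abs_nonneg _) (fun t ht => by
        have := CT_norm_le hint (z := x + t * Complex.I) (by simpa using ht.ne')
        have h3 := Complex.abs_re_le_norm (CT ρ (x + t * Complex.I))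
        have h4 : |((x : ℂ) + t * Complex.I).im| = t := by simpa using ht.le
        rw [h4] at this
        exact h3.trans this) (CT_re_tendsto hint x (H x) (hH x))
    obtain ⟨n, hn⟩ := exists_nat_ge M
    exact ⟨n, fun t ht _ => (hM t ht).trans hn⟩
  obtain ⟨a, haS, δ, n, hδ, hU, hE⟩ := baire_loc (GoodQ.isClosed_sing Q)
    (U := {x : ℝ | |s0| / 2 < |x|}) (isOpen_lt continuous_const continuous_abs) hcon
    (by show |s0| / 2 < |s0|; have := abs_pos.2 hs0; linarith)
    (fun n : ℕ => E_closed hint (n : ℝ)) hcov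
  set κ := |s0| / 2 with hκ
  have hκ0 : 0 < κ := by have := abs_pos.2 hs0; positivity
  set A := ∫ y, |ρ y| with hA
  have hA0 : 0 ≤ A := integral_nonneg fun y => abs_nonneg _
  set c1 := 2 * (n : ℝ) / κ + A / κ ^ 2 with hc1
  have hc10 : 0 ≤ c1 := by positivity
  refine haS (good.local hδ (g := fun y => c1 * ρ y + 2 * |H y * ρ y / y|)
    (C0 := (n : ℝ) ^ 2 / κ ^ 2)
    ((hint.const_mul c1).add (h1.abs.const_mul 2)) (fun x => ?_) (by positivity) ?_
    (Q_ae heven hint hH h1 h2))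
  · have := hρ x
    positivity
  intro s hs hsS t ht0 ht1
  have hz : ((s : ℂ) + t * Complex.I).im ≠ 0 := by simpa using ht0.ne'
  have hsκ : κ ≤ |s| := le_of_lt (hU s hs)
  have hre := hE s hs hsS t ht0 ht1
  rw [NN_add (hint.const_mul c1) (h1.abs.const_mul 2) ht0, NN_const, NN_const, hQ, QQ_of hz,
    Q0_rel heven hint h2 hz]
  have b1 := NN_abs h1 ht0 s
  have b2 := NN_eq hint ht0 s
  have b3 := NN_nonneg hρ ht0 s
  have b4 := CT_mul_le hint hz
  have h4 : |((s : ℂ) + t * Complex.I).im| = t := by simpa using ht0.le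
  rw [h4] at b4
  have b5 := Complex.abs_im_le_norm (CT ρ (s + t * Complex.I))
  have b6 := Im_sq_div (u := (CT ρ (s + t * Complex.I)).re) (v := (CT ρ (s + t * Complex.I)).im)
    (A := A) hκ0 hsκ ht0 ht1 hre ((mul_le_mul_of_nonneg_left b5 ht0.le).trans b4)
  have e1 : (⟨s, t⟩ : ℂ) = s + t * Complex.I := by
    apply Complex.ext <;> simp
  rw [Complex.eta, e1] at b6
  have e2 : |(CT ρ (s + t * Complex.I)).im| = NN ρ t s := by
    rw [← b2, abs_of_nonpos (by linarith)]
  rw [e2] at b6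
  rw [Complex.sub_im]
  have e3 : (2 * CT (fun x => H x * ρ x / x) (s + t * Complex.I)).im =
      2 * (CT (fun x => H x * ρ x / x) (s + t * Complex.I)).im := by simp
  rw [e3]
  have b7 := abs_sub (CT ρ (s + t * Complex.I) ^ 2 / (s + t * Complex.I)).im
    (2 * (CT (fun x => H x * ρ x / x) (s + t * Complex.I)).im)
  rw [abs_mul, abs_two] at b7
  linarith

lemma GoodQ.zero {Q : ℂ → ℂ} (h : GoodQ Q) (hreg : ∀ x : ℝ, x ≠ 0 → AnalyticAt ℂ Q x)
    (hlim : Tendsto (fun t : ℝ => (t : ℂ) * Q (t * Complex.I)) (nhdsWithin 0 (Set.Ioi 0))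
      (nhds 0)) : AnalyticAt ℂ Q (0 : ℝ) := by
  set P : ℂ → ℂ := fun z => z ^ 2 * Q z with hP
  have hP0 : P 0 = 0 := by simp [hP]
  have hcont : ContinuousAt P 0 := by
    rw [Metric.continuousAt_iff]
    intro ε hε
    obtain ⟨t0, ht0, hs⟩ := h.hs (ε / 40) (by positivity)
    refine ⟨t0, ht0, fun {w} hw => ?_⟩
    rw [hP0, dist_zero_right, hP]
    rw [dist_zero_right] at hw
    simp only [norm_mul, norm_pow]
    have hre := Complex.abs_re_le_norm w
    have him := Complex.abs_im_le_norm w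
    have hn : ‖w‖ ^ 2 = |w.re| ^ 2 + |w.im| ^ 2 := by
      rw [Complex.sq_norm, Complex.normSq_apply, sq_abs, sq_abs]; ring
    have hQ0 := norm_nonneg (Q w)
    by_cases hw0 : w = 0
    · rw [hw0]; simpa using hε
    rcases le_or_gt |w.im| (|w.re| / 2) with hc | hc
    · have hre0 : 0 < |w.re| := by
        rcases eq_or_lt_of_le (abs_nonneg w.re) with h0 | h0
        · exfalso
          apply hw0
          have h1 : |w.im| = 0 := le_antisymm (by linarith) (abs_nonneg _)
          exact Complex.ext (abs_eq_zero.1 h0.symm) (abs_eq_zero.1 h1)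
        · exact h0
      have := h.lemA' (r := |w.re| / 2) (W := ε / 40) (w := w) (by positivity) (by positivity)
        (fun y hy => hreg y (by
          rintro rfl
          rw [zero_sub, abs_neg] at hy
          linarith)) (fun z hz hz2 => hs z hz (by linarith)) hc
      rw [le_div_iff₀ (by positivity)] at this
      have h5 : ‖w‖ ^ 2 ≤ 5 * (|w.re| / 2) ^ 2 := by rw [hn]; nlinarith [abs_nonneg w.im]
      nlinarith [mul_le_mul_of_nonneg_right h5 hQ0]
    · have hi0 : 0 < |w.im| := lt_of_le_of_lt (by positivity) hc
      have := hs w (abs_pos.1 hi0) (by linarith)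
      rw [← sq_abs] at this
      have h5 : ‖w‖ ^ 2 ≤ 5 * |w.im| ^ 2 := by rw [hn]; nlinarith [abs_nonneg w.re]
      nlinarith [mul_le_mul_of_nonneg_right h5 hQ0]
  have hPa : AnalyticAt ℂ P 0 := by
    refine Complex.analyticAt_of_differentiable_on_punctured_nhds_of_continuousAt ?_ hcont
    filter_upwards [self_mem_nhdsWithin] with z hz
    have hz : z ≠ 0 := hz
    refine DifferentiableAt.mul (by fun_prop) (h.diff fun h0 => hreg _ ?_)
    intro h1
    exact hz (Complex.ext h1 h0)
  have dsl : ∀ f : ℂ → ℂ, AnalyticAt ℂ f 0 → AnalyticAt ℂ (dslope f 0) 0 := by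
    rintro f ⟨p, hp⟩
    exact ⟨_, hp.has_fpower_series_dslope_fslope⟩
  set R := dslope P 0 with hR
  have hRa : AnalyticAt ℂ R 0 := dsl P hPa
  have hRe : ∀ z : ℂ, z ≠ 0 → R z = z * Q z := by
    intro z hz
    rw [hR, dslope_of_ne _ hz, slope_def_field, hP0]
    simp only [hP]
    field_simp
    ring
  have t1 : Tendsto (fun t : ℝ => (t : ℂ) * Complex.I) (nhdsWithin 0 (Set.Ioi 0))
      (nhds 0) := by
    have : Continuous (fun t : ℝ => (t : ℂ) * Complex.I) := by fun_prop
    have := this.tendsto 0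
    simp only [Complex.ofReal_zero, zero_mul] at this
    exact this.mono_left nhdsWithin_le_nhds
  have hR0 : R 0 = 0 := by
    refine tendsto_nhds_unique (hRa.continuousAt.tendsto.comp t1) ?_
    have := hlim.const_mul Complex.I
    rw [mul_zero] at this
    refine this.congr' ?_
    filter_upwards [self_mem_nhdsWithin] with t ht
    have ht : (0:ℝ) < t := ht
    have ht' : (t : ℂ) ≠ 0 := by exact_mod_cast ht.ne'
    rw [Function.comp_apply, hRe _ (mul_ne_zero ht' Complex.I_ne_zero)]
    ring
  refine h.ext 0 (dslope R 0) (by simpa using dsl R hRa) (Eventually.of_forall fun z hz => ?_)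
  have hz0 : z ≠ 0 := by
    rintro rfl; simp at hz
  rw [dslope_of_ne _ hz0, slope_def_field, hR0, hRe z hz0]
  field_simp
  ring

lemma GoodQ.liouville {Q : ℂ → ℂ} (h : GoodQ Q) (hreg : ∀ x : ℝ, AnalyticAt ℂ Q x) (w : ℂ) :
    Q w = 0 := by
  obtain ⟨C, hC0, hC⟩ := h.hC
  have key : ∀ R : ℝ, 1 + 2 * ‖w‖ ≤ R → R * ‖Q w‖ ≤ 32 * C := by
    intro R hR
    have hw := norm_nonneg w
    have hR0 : 0 < R := by linarith
    have h1 := h.lemA (c := 0) (r := R) (W := C * (1 + R)) (w := w) hR0 (by positivity)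
      (fun y _ => hreg y) (fun z hz hz2 => (hC z hz).trans (by gcongr)) (by simp; linarith)
    have h2 : R ^ 2 / 2 ≤ ‖(w - (0:ℝ)) ^ 2 - (R : ℂ) ^ 2‖ := by
      have := norm_sub_norm_le ((R : ℂ) ^ 2) ((w - (0:ℝ)) ^ 2)
      rw [norm_sub_rev] at this
      simp only [norm_pow, Complex.norm_real, Complex.ofReal_zero, sub_zero, Real.norm_eq_abs,
        sq_abs] at this ⊢
      nlinarith
    have h3 : (R ^ 2 / 2) ^ 2 * ‖Q w‖ ≤ 4 * R ^ 2 * (C * (1 + R)) := by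
      refine le_trans ?_ h1
      gcongr
    have h4 : R ^ 3 * (R * ‖Q w‖) ≤ R ^ 3 * (32 * C) := by
      have : 4 * R ^ 2 * (C * (1 + R)) ≤ 8 * R ^ 3 * C := by
        have : 0 ≤ C * R ^ 2 * (R - 1) := mul_nonneg (by positivity) (by linarith)
        nlinarith
      nlinarith
    exact le_of_mul_le_mul_left h4 (by positivity)
  by_contra hne
  have hp : 0 < ‖Q w‖ := norm_pos_iff.2 hne
  have hw := norm_nonneg w
  have := key (1 + 2 * ‖w‖ + 32 * C / ‖Q w‖) (by have : 0 ≤ 32 * C / ‖Q w‖ := by positivity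
                                                 linarith)
  rw [add_mul, div_mul_cancel₀ _ hp.ne'] at this
  nlinarith

lemma CT_inf {f : ℝ → ℝ} (hf : Integrable f) :
    Tendsto (fun t : ℝ => (t * Complex.I) * CT f (t * Complex.I)) atTop
      (nhds (∫ y, (f y : ℂ))) := by
  simp only [CT, ← integral_const_mul]
  refine tendsto_integral_filter_of_dominated_convergence (fun y => |f y|) ?_ ?_ hf.abs ?_
  · exact Eventually.of_forall fun t => (CT_aesm hf _).const_mul _
  · filter_upwards [eventually_gt_atTop 0] with t ht
    refine Eventually.of_forall fun y => ?_
    have h1 := CT_im_le (t * Complex.I) y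
    have h4 : |((t : ℂ) * Complex.I).im| = t := by simpa using ht.le
    rw [h4] at h1
    rw [norm_mul, norm_div, Complex.norm_real, Real.norm_eq_abs, norm_mul, Complex.norm_I, mul_one,
      Complex.norm_real, Real.norm_eq_abs, abs_of_pos ht, ← mul_div_assoc,
      div_le_iff₀ (by linarith)]
    nlinarith [abs_nonneg (f y)]
  · refine Eventually.of_forall fun y => ?_
    have a : Tendsto (fun t : ℝ => 1 - (y : ℂ) * Complex.I⁻¹ * ((t⁻¹ : ℝ) : ℂ)) atTop (nhds 1) := by
      have := (Complex.continuous_ofReal.tendsto 0).comp (tendsto_inv_atTop_zero (𝕜 := ℝ))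
      have := (this.const_mul ((y : ℂ) * Complex.I⁻¹)).const_sub 1
      simpa using this
    have b := (a.inv₀ one_ne_zero).const_mul (f y : ℂ)
    rw [inv_one, mul_one] at b
    refine b.congr' ?_
    filter_upwards [eventually_gt_atTop 0] with t ht
    have ht' : (t : ℂ) ≠ 0 := by exact_mod_cast ht.ne'
    have h3 := CT_sub_ne (z := t * Complex.I) (by simpa using ht.ne') y
    have e : 1 - (y : ℂ) * Complex.I⁻¹ * ((t⁻¹ : ℝ) : ℂ) = (t * Complex.I - y) / (t * Complex.I) := by
      have := Complex.I_ne_zero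
      push_cast
      field_simp
    rw [e, inv_div]
    ring

theorem stmt4 (ρ : ℝ → ℝ) (hρ : ∀ x, 0 ≤ ρ x) (heven : ∀ x, ρ (-x) = ρ x)
    (hint : Integrable ρ) (hprob : ∫ x, ρ x = 1)
    (H : ℝ → ℝ)
    (hH : ∀ x : ℝ, Tendsto (fun ε : ℝ => ∫ y in {y : ℝ | ε ≤ |x - y|}, ρ y / (x - y))
        (nhdsWithin 0 (Set.Ioi 0)) (nhds (H x)))
    (h1 : Integrable (fun x => H x * ρ x / x))
    (h2 : Integrable (fun x => ρ x / x))
    (h3 : Integrable (fun p : ℝ × ℝ => ρ p.1 * ρ p.2 / (p.1 * p.2))) :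
    ∫ x, H x * (1 / x) * ρ x = 0 := by
  have e0 : ∫ x, H x * (1 / x) * ρ x = ∫ x, H x * ρ x / x := by
    congr 1
    ext x
    ring
  rw [e0]
  have good := QQ_good hint h2 h1
  have reg : ∀ x : ℝ, x ≠ 0 → AnalyticAt ℂ (QQ ρ (fun x => ρ x / x) (fun x => H x * ρ x / x)) x :=
    fun x hx => Q_reg hρ heven hint hH h1 h2 hx
  have smallT : ∀ {f : ℝ → ℝ}, Integrable f → Tendsto (fun t : ℝ => (t : ℂ) * CT f (t * Complex.I))
      (nhdsWithin 0 (Set.Ioi 0)) (nhds 0) := by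
    intro f hf
    rw [Metric.tendsto_nhds]
    intro ε hε
    obtain ⟨t0, ht0, hs⟩ := CT_small hf (half_pos hε)
    filter_upwards [self_mem_nhdsWithin, nhdsWithin_le_nhds (Iio_mem_nhds ht0)] with t ht ht2
    have ht : (0:ℝ) < t := ht
    have ht2 : t < t0 := ht2
    have h4 : |((t : ℂ) * Complex.I).im| = t := by simpa using ht.le
    have := hs (t * Complex.I) (by simpa using ht.ne') (by rwa [h4])
    rw [h4] at this
    rw [dist_zero_right, norm_mul, Complex.norm_real, Real.norm_eq_abs, abs_of_pos ht]
    linarith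
  have hlim : Tendsto (fun t : ℝ => (t : ℂ) *
      QQ ρ (fun x => ρ x / x) (fun x => H x * ρ x / x) (t * Complex.I))
      (nhdsWithin 0 (Set.Ioi 0)) (nhds 0) := by
    have a := smallT h2
    have b := smallT h1
    have := ((a.mul a).const_mul Complex.I).sub (b.const_mul 2)
    simp only [mul_zero, sub_zero] at this
    refine this.congr' ?_
    filter_upwards [self_mem_nhdsWithin] with t ht
    have ht : (0:ℝ) < t := ht
    have hz : ((t : ℂ) * Complex.I).im ≠ 0 := by simpa using ht.ne'
    rw [QQ_of hz, Q0, ← CT_rel heven hint h2 hz]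
    ring
  have reg0 := good.zero reg hlim
  have hQ := good.liouville (fun x => by
    rcases eq_or_ne x 0 with hx | hx
    · rw [hx]; exact reg0
    · exact reg x hx)
  have hl1 := (CT_inf h1).const_mul 2
  have hl2 : Tendsto (fun t : ℝ => CT ρ (t * Complex.I) ^ 2) atTop (nhds 0) := by
    have : Tendsto (fun t : ℝ => CT ρ (t * Complex.I)) atTop (nhds 0) := by
      refine squeeze_zero_norm' (a := fun t : ℝ => (∫ y, |ρ y|) / t) ?_
        (tendsto_const_nhds.div_atTop tendsto_id)
      filter_upwards [eventually_gt_atTop 0] with t ht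
      have := CT_norm_le hint (z := t * Complex.I) (by simpa using ht.ne')
      have h4 : |((t : ℂ) * Complex.I).im| = t := by simpa using ht.le
      rwa [h4] at this
    simpa using this.pow 2
  have hl3 := tendsto_nhds_unique_of_eventuallyEq hl1 hl2 (by
    filter_upwards [eventually_gt_atTop 0] with t ht
    have hz : ((t : ℂ) * Complex.I).im ≠ 0 := by simpa using ht.ne'
    have hz0 : (t : ℂ) * Complex.I ≠ 0 := by
      intro h0; rw [h0] at hz; simp at hz
    have := hQ (t * Complex.I)
    rw [QQ_of hz, Q0_rel heven hint h2 hz, sub_eq_zero, div_eq_iff hz0] at this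
    rw [this]
    ring)
  have hl4 : ∫ y, ((H y * ρ y / y : ℝ) : ℂ) = 0 := by
    simpa using hl3
  rw [integral_complex_ofReal] at hl4
  exact_mod_cast hl4
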